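/- arXiv:1909.02748 — 6 statements merged into one kernel-verified Lean document; each statement's English description precedes it below -/
import Mathlib

section
/- Let R₁, R₂, R₃ be m₁×n₁ complex matrices and S₁, S₂, S₃ be m₂×n₂ complex matrices such that R₁, R₂, R₃ are linearly independent and S₁, S₂, S₃ are linearly independent. Then rank(∑_{i=1}^{3} R_i ⊗ S_i) ≤ 3 · rank(∑_{i=1}^{3} R_i ⊗ S_iᵀ), where ⊗ denotes the Kronecker product. -/
open Matrix Kronecker

namespace PTRank

open Module Submodule

section general
variable {P Q E B A : Type} [AddCommGroup P] [Module ℂ P] [AddCommGroup Q] [Module ℂ Q]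
  [AddCommGroup E] [Module ℂ E] [AddCommGroup B] [Module ℂ B] [AddCommGroup A] [Module ℂ A]

/-- The flattening `y, β ↦ (x ↦ T (R x y) β)`. -/
noncomputable def flat (T : E →ₗ[ℂ] B →ₗ[ℂ] A) (R : P →ₗ[ℂ] Q →ₗ[ℂ] E) :
    Q →ₗ[ℂ] B →ₗ[ℂ] (P →ₗ[ℂ] A) :=
  LinearMap.mk₂ ℂ (fun y β => (T.flip β) ∘ₗ (R.flip y))
    (by intros; ext; simp) (by intros; ext; simp) (by intros; ext; simp) (by intros; ext; simp)

theorem flat_apply (T : E →ₗ[ℂ] B →ₗ[ℂ] A) (R : P →ₗ[ℂ] Q →ₗ[ℂ] E) (x : P) (y : Q) (β : B) :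
    flat T R y β x = T (R x y) β := rfl

/-- The image of a subspace `U` of `E`. -/
noncomputable def im (T : E →ₗ[ℂ] B →ₗ[ℂ] A) (U : Submodule ℂ E) : Submodule ℂ A := map₂ T U ⊤

noncomputable def t (T : E →ₗ[ℂ] B →ₗ[ℂ] A) (U : Submodule ℂ E) : ℕ := finrank ℂ (im T U)

noncomputable def cn (T : E →ₗ[ℂ] B →ₗ[ℂ] A) (R : P →ₗ[ℂ] Q →ₗ[ℂ] E) : Submodule ℂ (P →ₗ[ℂ] A) :=
  map₂ (flat T R) ⊤ ⊤

theorem rank_nullity {V W : Type} [AddCommGroup V] [Module ℂ V] [AddCommGroup W] [Module ℂ W]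
    [FiniteDimensional ℂ V] (f : V →ₗ[ℂ] W) (C : Submodule ℂ V) :
    finrank ℂ C = finrank ℂ (C.map f) + finrank ℂ (C ⊓ LinearMap.ker f : Submodule ℂ V) := by
  rw [← (f.domRestrict C).finrank_range_add_finrank_ker, LinearMap.range_domRestrict]
  congr 1
  rw [LinearMap.ker_domRestrict, ← finrank_map_subtype_eq C, Submodule.map_comap_subtype]

variable [FiniteDimensional ℂ P] [FiniteDimensional ℂ Q] [FiniteDimensional ℂ A]

theorem t_mono (T : E →ₗ[ℂ] B →ₗ[ℂ] A) {U V : Submodule ℂ E} (h : U ≤ V) : t T U ≤ t T V :=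
  finrank_mono (map₂_le_map₂_left h)

theorem t_submod (T : E →ₗ[ℂ] B →ₗ[ℂ] A) {U V W : Submodule ℂ E} (h1 : W ≤ U) (h2 : W ≤ V) :
    t T (U ⊔ V) + t T W ≤ t T U + t T V := by
  have h := finrank_sup_add_finrank_inf_eq (im T U) (im T V)
  have h3 : t T W ≤ finrank ℂ (im T U ⊓ im T V : Submodule ℂ A) :=
    finrank_mono (le_inf (map₂_le_map₂_left h1) (map₂_le_map₂_left h2))
  have h4 : im T (U ⊔ V) = im T U ⊔ im T V := map₂_sup_left _ _ _ _
  simp only [t] at *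
  rw [h4]; omega

theorem lower (T : E →ₗ[ℂ] B →ₗ[ℂ] A) (R : P →ₗ[ℂ] Q →ₗ[ℂ] E) (x : P) :
    t T (LinearMap.range (R x)) +
      finrank ℂ (cn T (R.compl₂ (LinearMap.ker (R x)).subtype)) ≤ finrank ℂ (cn T R) := by
  rw [rank_nullity (LinearMap.applyₗ x : (P →ₗ[ℂ] A) →ₗ[ℂ] A) (cn T R)]
  apply add_le_add
  · apply finrank_mono
    refine map₂_le.2 ?_
    rintro _ ⟨y, rfl⟩ β -
    exact ⟨flat T R y β, apply_mem_map₂ _ mem_top mem_top, rfl⟩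
  · apply finrank_mono
    refine map₂_le.2 ?_
    rintro ⟨y, hy⟩ - β -
    refine ⟨apply_mem_map₂ (flat T R) (m := y) (n := β) mem_top mem_top, ?_⟩
    show T (R x y) β = 0
    rw [LinearMap.mem_ker.1 hy]; simp

theorem upper (T : E →ₗ[ℂ] B →ₗ[ℂ] A) (R : P →ₗ[ℂ] Q →ₗ[ℂ] E) (x : P) {d : ℕ} (y : Fin d → Q)
    (hy : LinearMap.range (R x) ≤ span ℂ (Set.range fun j => R x (y j))) :
    finrank ℂ (cn T R.flip) ≤
      finrank ℂ (cn T (R.compl₂ (LinearMap.ker (R x)).subtype).flip) +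
      ∑ j, t T (LinearMap.range (R.flip (y j))) := by
  set K := LinearMap.ker (R x) with hK
  let res : (Q →ₗ[ℂ] A) →ₗ[ℂ] (K →ₗ[ℂ] A) := LinearMap.lcomp ℂ A K.subtype
  rw [rank_nullity res (cn T R.flip)]
  apply add_le_add
  · apply finrank_mono
    rw [Submodule.map_le_iff_le_comap]
    refine map₂_le.2 ?_
    rintro x' - β -
    exact apply_mem_map₂ (flat T (R.compl₂ K.subtype).flip) (m := x') (n := β) mem_top mem_top
  · have hmem : ∀ φ ∈ cn T R.flip, ∀ j, φ (y j) ∈ im T (LinearMap.range (R.flip (y j))) := by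
      intro φ hφ j
      have : cn T R.flip ≤ (im T (LinearMap.range (R.flip (y j)))).comap
          (LinearMap.applyₗ (y j) : (Q →ₗ[ℂ] A) →ₗ[ℂ] A) := by
        refine map₂_le.2 ?_
        rintro x' - β -
        exact apply_mem_map₂ T (m := R x' (y j)) (n := β) ⟨x', rfl⟩ mem_top
      exact this hφ
    let ev : (cn T R.flip ⊓ LinearMap.ker res : Submodule ℂ (Q →ₗ[ℂ] A)) →ₗ[ℂ]
        ((j : Fin d) → im T (LinearMap.range (R.flip (y j)))) :=
      LinearMap.pi fun j => LinearMap.codRestrict _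
        ((LinearMap.applyₗ (y j) : (Q →ₗ[ℂ] A) →ₗ[ℂ] A) ∘ₗ Submodule.subtype _)
        (fun φ => hmem φ.1 φ.2.1 j)
    have hinj : Function.Injective ev := by
      rw [injective_iff_map_eq_zero]
      rintro ⟨φ, hφ1, hφ2⟩ h0
      have h1 : ∀ j, φ (y j) = 0 := fun j => congrArg Subtype.val (congrFun h0 j)
      have h2 : ∀ z, R x z = 0 → φ z = 0 := fun z hz =>
        LinearMap.congr_fun (LinearMap.mem_ker.1 hφ2) (⟨z, hz⟩ : K)
      ext z
      obtain ⟨c, hc⟩ := (mem_span_range_iff_exists_fun ℂ).1 (hy ⟨z, rfl⟩)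
      have h3 := h2 (z - ∑ j, c j • y j) (by simp [map_sum, hc])
      simpa [map_sum, h1] using h3
    have := LinearMap.finrank_le_finrank_of_injective hinj
    rwa [finrank_pi_fintype] at this

theorem t_bot (T : E →ₗ[ℂ] B →ₗ[ℂ] A) : t T ⊥ = 0 := by
  rw [t, im, map₂_bot_left]; exact finrank_bot ℂ A

theorem all_le (T : E →ₗ[ℂ] B →ₗ[ℂ] A) (R : P →ₗ[ℂ] Q →ₗ[ℂ] E) [FiniteDimensional ℂ E]
    (hE : finrank ℂ E = 3) (τ : ℕ) (hmax : ∀ z, t T (LinearMap.range (R z)) ≤ τ) :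
    t T (map₂ R ⊤ ⊤) ≤ 3 * τ := by
  have key : ∀ k : ℕ, ∃ G : Submodule ℂ E, t T G ≤ k * τ ∧
      (map₂ R ⊤ ⊤ ≤ G ∨ k ≤ finrank ℂ G) := by
    intro k
    induction k with
    | zero => exact ⟨⊥, by simp [t_bot], Or.inr (Nat.zero_le _)⟩
    | succ k ih =>
      obtain ⟨G, h1, h2⟩ := ih
      by_cases hF : map₂ R ⊤ ⊤ ≤ G
      · exact ⟨G, h1.trans (Nat.mul_le_mul_right _ (Nat.le_succ k)), Or.inl hF⟩
      · have h3 := h2.resolve_left hF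
        rw [map₂_le] at hF
        push Not at hF
        obtain ⟨x, -, y, -, hxy⟩ := hF
        refine ⟨G ⊔ LinearMap.range (R x), ?_, Or.inr ?_⟩
        · have := t_submod T (U := G) (V := LinearMap.range (R x)) (W := ⊥) bot_le bot_le
          have := hmax x
          rw [Nat.succ_mul]; omega
        · refine Nat.succ_le_of_lt (lt_of_le_of_lt h3 (finrank_lt_finrank_of_lt ?_))
          refine lt_of_le_of_ne le_sup_left fun h => hxy ?_
          rw [h]
          exact le_sup_right (a := G) ⟨y, rfl⟩
  obtain ⟨G, h1, h2⟩ := key 3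
  refine le_trans (t_mono T ?_) h1
  rcases h2 with h2 | h2
  · exact h2
  · have : G = ⊤ := eq_top_of_finrank_eq (le_antisymm (finrank_le _) (by omega))
    rw [this]; exact le_top

theorem col_le (T : E →ₗ[ℂ] B →ₗ[ℂ] A) (R : P →ₗ[ℂ] Q →ₗ[ℂ] E) (y : Q) :
    t T (LinearMap.range (R.flip y)) ≤ t T (map₂ R ⊤ ⊤) := by
  apply t_mono
  rintro _ ⟨x, rfl⟩
  exact apply_mem_map₂ R mem_top mem_top

theorem eq_top_of_fun (g : E →ₗ[ℂ] ℂ) (W : Submodule ℂ E) (h : LinearMap.ker g ≤ W) (e : E)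
    (he : e ∈ W) (hg : g e ≠ 0) : W = ⊤ := by
  rw [eq_top_iff]
  intro e' _
  have h1 : e' - (g e' / g e) • e ∈ W := h (by simp [hg])
  simpa using W.add_mem h1 (W.smul_mem (g e' / g e) he)

theorem exists_c (p1 p2 q1 q2 : ℂ) :
    ∃ c : ℂ, c ≠ 0 ∧ (c * p1) * (c * q2) - (1 + c * p2) * (1 + c * q1) ≠ 0 := by
  by_contra! h
  have h1 := h 1 (by norm_num)
  have h2 := h (-1) (by norm_num)
  have h3 := h 2 (by norm_num)
  have : (3 : ℂ) = 0 := by linear_combination h3 - 3 * h1 - h2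
  norm_num at this

/-- The case of two independent functionals. -/
theorem indep_case (T : E →ₗ[ℂ] B →ₗ[ℂ] A) (R : P →ₗ[ℂ] Q →ₗ[ℂ] E) (x : P)
    (hmax : ∀ z, t T (LinearMap.range (R z)) ≤ t T (LinearMap.range (R x)))
    (g : E →ₗ[ℂ] ℂ) (hg : LinearMap.ker g = LinearMap.range (R x)) (y1 y2 : Q)
    (hspan : LinearMap.range (R x) = span ℂ {R x y1, R x y2})
    (w1 w2 : P) (h11 : g (R w1 y1) = 1) (h12 : g (R w1 y2) = 0)
    (h21 : g (R w2 y1) = 0) (h22 : g (R w2 y2) = 1) :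
    2 * t T ⊤ ≤ 3 * t T (LinearMap.range (R x)) := by
  have hx : ∀ y, g (R x y) = 0 := fun y => by
    have : R x y ∈ LinearMap.ker g := hg ▸ ⟨y, rfl⟩
    exact this
  have m1 : R w1 y2 ∈ span ℂ {R x y1, R x y2} := by rw [← hspan, ← hg]; exact h12
  have m2 : R w2 y1 ∈ span ℂ {R x y1, R x y2} := by rw [← hspan, ← hg]; exact h21
  obtain ⟨p1, p2, hp⟩ := mem_span_pair.1 m1
  obtain ⟨q1, q2, hq⟩ := mem_span_pair.1 m2
  obtain ⟨c, hc, hdet⟩ := exists_c p1 p2 q1 q2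
  set D := (c * p1) * (c * q2) - (1 + c * p2) * (1 + c * q1) with hD
  set U := LinearMap.range (R x) with hU
  set v := R (x + c • w1) y2 with hv
  set v' := R (x + c • w2) y1 with hv'
  have ev : v = (c * p1) • R x y1 + (1 + c * p2) • R x y2 := by
    simp only [hv, map_add, map_smul, LinearMap.add_apply, LinearMap.smul_apply, ← hp]; module
  have ev' : v' = (1 + c * q1) • R x y1 + (c * q2) • R x y2 := by
    simp only [hv', map_add, map_smul, LinearMap.add_apply, LinearMap.smul_apply, ← hq]; module
  have s1 := hmax (x + c • w1)
  have s2 := hmax (x + c • w2)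
  have hvU : v ∈ U := by
    rw [ev]
    exact U.add_mem (U.smul_mem _ ⟨y1, rfl⟩) (U.smul_mem _ ⟨y2, rfl⟩)
  have t1 : U ⊔ LinearMap.range (R (x + c • w1)) = ⊤ := by
    refine eq_top_of_fun g _ (hg ▸ le_sup_left) (R (x + c • w1) y1)
      (le_sup_right (a := U) ⟨y1, rfl⟩) ?_
    simp [hx, h11, hc]
  have t2 : span ℂ {v} ⊔ LinearMap.range (R (x + c • w2)) = ⊤ := by
    set W := span ℂ {v} ⊔ LinearMap.range (R (x + c • w2)) with hW
    have hvW : v ∈ W := le_sup_left (a := span ℂ {v}) (mem_span_singleton_self v)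
    have hvW' : v' ∈ W := le_sup_right (a := span ℂ {v}) ⟨y1, rfl⟩
    refine eq_top_of_fun g _ ?_ (R (x + c • w2) y2)
      (le_sup_right (a := span ℂ {v}) ⟨y2, rfl⟩) ?_
    · rw [hg, hspan, span_le]
      have e1 : R x y1 = (c * q2 / D) • v - ((1 + c * p2) / D) • v' := by
        have : (1 : ℂ) = (c * q2 / D) * (c * p1) - ((1 + c * p2) / D) * (1 + c * q1) := by
          rw [eq_comm, div_mul_eq_mul_div, div_mul_eq_mul_div, ← sub_div, div_eq_one_iff_eq hdet, hD]
          ring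
        rw [ev, ev']
        calc R x y1 = ((c * q2 / D) * (c * p1) - ((1 + c * p2) / D) * (1 + c * q1)) • R x y1 := by rw [← this, one_smul]
          _ = _ := by module
      have e2 : R x y2 = (c * p1 / D) • v' - ((1 + c * q1) / D) • v := by
        have : (1 : ℂ) = (c * p1 / D) * (c * q2) - ((1 + c * q1) / D) * (1 + c * p2) := by
          rw [eq_comm, div_mul_eq_mul_div, div_mul_eq_mul_div, ← sub_div, div_eq_one_iff_eq hdet, hD]
          ring
        rw [ev, ev']
        calc R x y2 = ((c * p1 / D) * (c * q2) - ((1 + c * q1) / D) * (1 + c * p2)) • R x y2 := by rw [← this, one_smul]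
          _ = _ := by module
      rintro _ (rfl | rfl)
      · rw [SetLike.mem_coe, e1]
        exact W.sub_mem (W.smul_mem _ hvW) (W.smul_mem _ hvW')
      · rw [SetLike.mem_coe, e2]
        exact W.sub_mem (W.smul_mem _ hvW') (W.smul_mem _ hvW)
    · simp [hx, h22, hc]
  have i1 := t_submod T (U := U) (V := LinearMap.range (R (x + c • w1))) (W := span ℂ {v})
    (by rw [span_singleton_le_iff_mem]; exact hvU)
    (by rw [span_singleton_le_iff_mem]; exact ⟨y2, rfl⟩)
  have i2 := t_submod T (U := span ℂ {v}) (V := LinearMap.range (R (x + c • w2))) (W := ⊥)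
    bot_le bot_le
  rw [t1] at i1
  rw [t2] at i2
  omega

/-- Two functionals: dual vectors exist, or they are proportional. -/
theorem dichotomy (g1 g2 : P →ₗ[ℂ] ℂ) :
    (∃ w1 w2, g1 w1 = 1 ∧ g2 w1 = 0 ∧ g1 w2 = 0 ∧ g2 w2 = 1) ∨
    (∃ a : ℂ, ∀ w, g2 w = a * g1 w) ∨ (∃ a : ℂ, ∀ w, g1 w = a * g2 w) := by
  by_cases h1 : ∃ w, g1 w ≠ 0
  · obtain ⟨w, hw⟩ := h1
    by_cases h2 : ∀ z, g2 z = (g2 w / g1 w) * g1 z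
    · exact Or.inr (Or.inl ⟨_, h2⟩)
    · push Not at h2
      obtain ⟨z, hz⟩ := h2
      left
      have hd : g2 z * g1 w - g2 w * g1 z ≠ 0 := by
        intro h0
        apply hz
        field_simp
        linear_combination h0
      set D := g2 z * g1 w - g2 w * g1 z with hD
      refine ⟨(g2 z / D) • w - (g2 w / D) • z, (g1 w / D) • z - (g1 z / D) • w, ?_, ?_, ?_, ?_⟩ <;>
        simp only [map_sub, map_smul, smul_eq_mul] <;> field_simp <;> rw [hD] <;> ring
  · push Not at h1
    exact Or.inr (Or.inr ⟨0, fun w => by simp [h1]⟩)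

theorem prop_case (T : E →ₗ[ℂ] B →ₗ[ℂ] A) (R : P →ₗ[ℂ] Q →ₗ[ℂ] E) (x : P)
    (hmax : ∀ z, t T (LinearMap.range (R z)) ≤ t T (LinearMap.range (R x)))
    (g : E →ₗ[ℂ] ℂ) (hg : LinearMap.ker g = LinearMap.range (R x)) (y1 y2 : Q)
    (hspan : LinearMap.range (R x) = span ℂ {R x y1, R x y2})
    (a : ℂ) (ha : ∀ w, g (R w y2) = a * g (R w y1)) :
    ∃ (d : ℕ) (y : Fin d → Q), LinearMap.range (R x) ≤ span ℂ (Set.range fun j => R x (y j)) ∧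
      ∑ j, t T (LinearMap.range (R.flip (y j))) ≤ 3 * t T (LinearMap.range (R x)) := by
  refine ⟨2, ![y1, y2 - a • y1], ?_, ?_⟩
  · rw [hspan, span_le]
    set W := span ℂ (Set.range fun j => R x (![y1, y2 - a • y1] j)) with hW
    have b1 : R x y1 ∈ W := subset_span ⟨0, rfl⟩
    have b2 : R x (y2 - a • y1) ∈ W := subset_span ⟨1, rfl⟩
    rintro _ (rfl | rfl)
    · exact b1
    · have := W.add_mem b2 (W.smul_mem a b1)
      simpa using this
  · have c1 : t T (LinearMap.range (R.flip (y2 - a • y1))) ≤ t T (LinearMap.range (R x)) := by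
      apply t_mono
      rintro _ ⟨w, rfl⟩
      rw [← hg]
      simp [ha]
    have c2 := col_le T R y1
    have c3 : t T (map₂ R ⊤ ⊤) ≤ 2 * t T (LinearMap.range (R x)) := by
      by_cases h : map₂ R ⊤ ⊤ ≤ LinearMap.range (R x)
      · have := t_mono T h; omega
      · rw [map₂_le] at h
        push Not at h
        obtain ⟨z, -, y, -, hzy⟩ := h
        have ht : LinearMap.range (R x) ⊔ LinearMap.range (R z) = ⊤ := by
          refine eq_top_of_fun g _ (hg ▸ le_sup_left) (R z y)
            (le_sup_right (a := LinearMap.range (R x)) ⟨y, rfl⟩) ?_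
          rw [← hg] at hzy
          exact hzy
        have := t_submod T (U := LinearMap.range (R x)) (V := LinearMap.range (R z)) (W := ⊥)
          bot_le bot_le
        have := hmax z
        have h5 : t T (map₂ R ⊤ ⊤) ≤ t T ⊤ := t_mono T le_top
        rw [ht] at *
        omega
    simp only [Fin.sum_univ_two, Matrix.cons_val_zero, Matrix.cons_val_one]
    omega

theorem step (T : E →ₗ[ℂ] B →ₗ[ℂ] A) (R : P →ₗ[ℂ] Q →ₗ[ℂ] E) [FiniteDimensional ℂ E]
    (hE : finrank ℂ E = 3) (x : P)
    (hmax : ∀ z, t T (LinearMap.range (R z)) ≤ t T (LinearMap.range (R x))) :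
    ∃ (d : ℕ) (y : Fin d → Q), LinearMap.range (R x) ≤ span ℂ (Set.range fun j => R x (y j)) ∧
      ∑ j, t T (LinearMap.range (R.flip (y j))) ≤ 3 * t T (LinearMap.range (R x)) := by
  obtain ⟨d, hd⟩ : ∃ d, d = finrank ℂ (LinearMap.range (R x)) := ⟨_, rfl⟩
  have hd3 : d ≤ 3 := by rw [hd, ← hE]; exact finrank_le _
  let b := finBasisOfFinrankEq ℂ (LinearMap.range (R x)) hd.symm
  have hb : ∀ j, ∃ y, R x y = (b j : E) := fun j => (b j).2
  choose y hy using hb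
  have hsp : LinearMap.range (R x) = span ℂ (Set.range fun j => R x (y j)) := by
    have h := congrArg (Submodule.map (LinearMap.range (R x)).subtype) b.span_eq
    rw [Submodule.map_span, Submodule.map_top, range_subtype, ← Set.range_comp] at h
    rw [← h]
    simp only [hy]
    rfl
  have hall := all_le T R hE _ hmax
  have hsum : ∑ j, t T (LinearMap.range (R.flip (y j))) ≤ d * t T (map₂ R ⊤ ⊤) := by
    calc _ ≤ ∑ _j : Fin d, t T (map₂ R ⊤ ⊤) := Finset.sum_le_sum fun j _ => col_le T R (y j)
      _ = _ := by simp
  by_cases h2 : d = 2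
  · subst h2
    have hsp2 : LinearMap.range (R x) = span ℂ {R x (y 0), R x (y 1)} := by
      rw [hsp]
      congr 1
      ext e
      simp [Set.mem_range, Fin.exists_fin_two, eq_comm]
    have hlt : LinearMap.range (R x) < ⊤ := by
      rw [lt_top_iff_ne_top]
      intro h
      rw [h, finrank_top] at hd
      omega
    obtain ⟨g, hg0, hg⟩ := exists_le_ker_of_lt_top _ hlt
    have hg' : LinearMap.ker g = LinearMap.range (R x) := by
      refine (eq_of_le_of_finrank_le hg ?_).symm
      have h1 : finrank ℂ (LinearMap.ker g) < finrank ℂ E := by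
        apply finrank_lt
        intro h
        exact hg0 (LinearMap.ker_eq_top.1 h)
      omega
    rcases dichotomy (g ∘ₗ R.flip (y 0)) (g ∘ₗ R.flip (y 1)) with
      ⟨w1, w2, h11, h12, h21, h22⟩ | ⟨a, ha⟩ | ⟨a, ha⟩
    · refine ⟨2, y, hsp.le, ?_⟩
      have := indep_case T R x hmax g hg' (y 0) (y 1) hsp2 w1 w2 h11 h12 h21 h22
      have h5 : t T (map₂ R ⊤ ⊤) ≤ t T ⊤ := t_mono T le_top
      omega
    · exact prop_case T R x hmax g hg' (y 0) (y 1) hsp2 a ha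
    · exact prop_case T R x hmax g hg' (y 1) (y 0) (by rw [hsp2, Set.pair_comm]) a ha
  · refine ⟨d, y, hsp.le, hsum.trans ?_⟩
    by_cases h3 : d = 3
    · have : LinearMap.range (R x) = ⊤ := eq_top_of_finrank_eq (by omega)
      rw [this, h3]
      exact Nat.mul_le_mul_left 3 (t_mono T le_top)
    · have : d ≤ 1 := by omega
      calc _ ≤ 1 * t T (map₂ R ⊤ ⊤) := Nat.mul_le_mul_right _ this
        _ ≤ _ := by omega

end general

theorem main {P E B A : Type} [AddCommGroup P] [Module ℂ P]
    [AddCommGroup E] [Module ℂ E] [AddCommGroup B] [Module ℂ B] [AddCommGroup A] [Module ℂ A]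
    [FiniteDimensional ℂ P] [FiniteDimensional ℂ A] [FiniteDimensional ℂ E]
    (hE : finrank ℂ E = 3) (T : E →ₗ[ℂ] B →ₗ[ℂ] A) (n : ℕ) :
    ∀ (Q : Type) [AddCommGroup Q] [Module ℂ Q] [FiniteDimensional ℂ Q]
    (R : P →ₗ[ℂ] Q →ₗ[ℂ] E), finrank ℂ Q = n →
    finrank ℂ (cn T R.flip) ≤ 3 * finrank ℂ (cn T R) := by
  induction n using Nat.strong_induction_on with
  | _ n ih =>
  intro Q _ _ _ R hn
  obtain ⟨x, hmax⟩ : ∃ x, ∀ z, t T (LinearMap.range (R z)) ≤ t T (LinearMap.range (R x)) := by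
    have hbdd : BddAbove (Set.range fun z => t T (LinearMap.range (R z))) :=
      ⟨finrank ℂ A, by rintro _ ⟨z, rfl⟩; exact finrank_le _⟩
    obtain ⟨x, hx⟩ := Nat.sSup_mem (Set.range_nonempty fun z => t T (LinearMap.range (R z))) hbdd
    refine ⟨x, fun z => ?_⟩
    simp only at hx
    rw [hx]
    exact le_csSup hbdd ⟨z, rfl⟩
  by_cases hx : R x = 0
  · have h0 : t T (LinearMap.range (R x)) = 0 := by
      rw [hx, LinearMap.range_zero, t_bot]
    have hF := all_le T R hE _ hmax
    rw [h0, mul_zero, Nat.le_zero] at hF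
    have hF' : im T (map₂ R ⊤ ⊤) = ⊥ := finrank_eq_zero.1 hF
    have : cn T R.flip = ⊥ := by
      rw [eq_bot_iff]
      refine map₂_le.2 ?_
      rintro z - β -
      rw [mem_bot]
      ext y
      have : T (R z y) β ∈ im T (map₂ R ⊤ ⊤) :=
        apply_mem_map₂ T (apply_mem_map₂ R mem_top mem_top) mem_top
      rw [hF'] at this
      exact this
    rw [this]; simp
  · obtain ⟨d, y, h1, h2⟩ := step T R hE x hmax
    have hlt : finrank ℂ (LinearMap.ker (R x)) < n := by
      rw [← hn]
      apply finrank_lt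
      intro h
      exact hx (LinearMap.ker_eq_top.1 h)
    have h3 := ih _ hlt (LinearMap.ker (R x)) (R.compl₂ (LinearMap.ker (R x)).subtype) rfl
    have h4 := lower T R x
    have h5 := upper T R x y h1
    omega

/-- Bilinear form with values in `ℂ³` from a triple of matrices. -/
noncomputable def RR {m n : ℕ} (R : Fin 3 → Matrix (Fin m) (Fin n) ℂ) :
    (Fin m → ℂ) →ₗ[ℂ] (Fin n → ℂ) →ₗ[ℂ] (Fin 3 → ℂ) :=
  LinearMap.mk₂ ℂ (fun x y i => x ⬝ᵥ (R i *ᵥ y))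
    (by intros; ext; simp [add_dotProduct]) (by intros; ext; simp)
    (by intros; ext; simp [mulVec_add]) (by intros; ext; simp [mulVec_smul])

noncomputable def TT {m n : ℕ} (S : Fin 3 → Matrix (Fin m) (Fin n) ℂ) :
    (Fin 3 → ℂ) →ₗ[ℂ] (Fin n → ℂ) →ₗ[ℂ] (Fin m → ℂ) :=
  LinearMap.mk₂ ℂ (fun e b => ∑ i, e i • (S i *ᵥ b))
    (by intros; simp [add_smul, Finset.sum_add_distrib]) (by intros; simp [Finset.smul_sum, smul_smul])
    (by intros; simp [mulVec_add, Finset.sum_add_distrib])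
    (by
      intro c e b
      simp only [mulVec_smul, Finset.smul_sum]
      exact Finset.sum_congr rfl fun i _ => smul_comm _ _ _)

theorem rank_eq {m n m' n' : ℕ} (R : Fin 3 → Matrix (Fin m) (Fin n) ℂ)
    (S : Fin 3 → Matrix (Fin m') (Fin n') ℂ) :
    (∑ i, R i ⊗ₖ S i).rank = finrank ℂ (cn (TT S) (RR R)) := by
  let Φ : ((Fin m → ℂ) →ₗ[ℂ] (Fin m' → ℂ)) →ₗ[ℂ] (Fin m × Fin m' → ℂ) :=
    { toFun := fun f p => f (Pi.single p.1 1) p.2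
      map_add' := by intros; rfl
      map_smul' := by intros; rfl }
  have hΦ : Function.Injective Φ := by
    intro f f' h
    refine LinearMap.pi_ext' fun i => LinearMap.ext_ring ?_
    ext k
    exact congrFun h (i, k)
  rw [rank_eq_finrank_span_cols, (Submodule.equivMapOfInjective Φ hΦ (cn (TT S) (RR R))).finrank_eq]
  have hcol : ∀ j l, (∑ i, R i ⊗ₖ S i).col (j, l) =
      Φ (flat (TT S) (RR R) (Pi.single j 1) (Pi.single l 1)) := by
    intro j l
    ext ⟨i, k⟩
    simp [Φ, flat_apply, RR, TT, Matrix.sum_apply]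
  have htop : ∀ n : ℕ, (⊤ : Submodule ℂ (Fin n → ℂ)) =
      span ℂ (Set.range fun j => (Pi.single j 1 : Fin n → ℂ)) := by
    intro n
    rw [← (Pi.basisFun ℂ (Fin n)).span_eq]
    congr 2
    ext j; simp
  have : span ℂ (Set.range (∑ i, R i ⊗ₖ S i).col) = (cn (TT S) (RR R)).map Φ := by
    rw [cn, htop n, htop n', map₂_span_span, Submodule.map_span]
    congr 1
    ext v
    constructor
    · rintro ⟨⟨j, l⟩, rfl⟩
      exact ⟨_, ⟨_, ⟨j, rfl⟩, _, ⟨l, rfl⟩, rfl⟩, (hcol j l).symm⟩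
    · rintro ⟨_, ⟨_, ⟨j, rfl⟩, _, ⟨l, rfl⟩, rfl⟩, rfl⟩
      exact ⟨(j, l), hcol j l⟩
  rw [this]

theorem RR_flip {m n : ℕ} (R : Fin 3 → Matrix (Fin m) (Fin n) ℂ) :
    (RR R).flip = RR fun i => (R i)ᵀ := by
  apply LinearMap.ext; intro y
  apply LinearMap.ext; intro x
  ext i
  show x ⬝ᵥ (R i *ᵥ y) = y ⬝ᵥ ((R i)ᵀ *ᵥ x)
  rw [mulVec_transpose, dotProduct_mulVec, dotProduct_comm]

end PTRank

theorem stmt0 (m₁ n₁ m₂ n₂ : ℕ)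
    (R : Fin 3 → Matrix (Fin m₁) (Fin n₁) ℂ)
    (S : Fin 3 → Matrix (Fin m₂) (Fin n₂) ℂ)
    (hR : LinearIndependent ℂ R) (hS : LinearIndependent ℂ S) :
    (∑ i, R i ⊗ₖ S i).rank ≤ 3 * (∑ i, R i ⊗ₖ (S i)ᵀ).rank := by
  have h := PTRank.main (by simp) (PTRank.TT fun i => (S i)ᵀ) n₁ (Fin n₁ → ℂ) (PTRank.RR R)
    (by simp)
  rw [PTRank.RR_flip, ← PTRank.rank_eq, ← PTRank.rank_eq] at h
  have h2 : (∑ i, R i ⊗ₖ S i)ᵀ = ∑ i, (R i)ᵀ ⊗ₖ (S i)ᵀ := by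
    rw [Matrix.transpose_sum]
    rfl
  rw [← rank_transpose, h2]
  exact h
end

section
/- Let ρ be a positive semidefinite Hermitian complex matrix indexed by (Fin a × Fin b × Fin c) × (Fin a × Fin b × Fin c), with bipartite reduced matrices ρ_AB, ρ_AC, ρ_BC obtained by partial trace. If rank(ρ_AB) ≤ 3, then rank(ρ_AB) · rank(ρ_AC) ≥ rank(ρ_BC). -/
open Matrix
open scoped ComplexOrder

/-- Reduced matrix on systems A,B (tracing out C). -/
noncomputable def rhoAB {a b c : ℕ} (ρ : Matrix (Fin a × Fin b × Fin c) (Fin a × Fin b × Fin c) ℂ) :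
    Matrix (Fin a × Fin b) (Fin a × Fin b) ℂ :=
  Matrix.of fun p q => ∑ k : Fin c, ρ (p.1, p.2, k) (q.1, q.2, k)

/-- Reduced matrix on systems A,C (tracing out B). -/
noncomputable def rhoAC {a b c : ℕ} (ρ : Matrix (Fin a × Fin b × Fin c) (Fin a × Fin b × Fin c) ℂ) :
    Matrix (Fin a × Fin c) (Fin a × Fin c) ℂ :=
  Matrix.of fun p q => ∑ j : Fin b, ρ (p.1, j, p.2) (q.1, j, q.2)

/-- Reduced matrix on systems B,C (tracing out A). -/
noncomputable def rhoBC {a b c : ℕ} (ρ : Matrix (Fin a × Fin b × Fin c) (Fin a × Fin b × Fin c) ℂ) :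
    Matrix (Fin b × Fin c) (Fin b × Fin c) ℂ :=
  Matrix.of fun p q => ∑ i : Fin a, ρ (i, p.1, p.2) (i, q.1, q.2)


open Module

section Helpers

lemma mat_rank_add_le {m n : Type*} [Fintype m] [Fintype n] (X Y : Matrix m n ℂ) :
    (X + Y).rank ≤ X.rank + Y.rank := by
  classical
  unfold Matrix.rank
  have h : LinearMap.range (X + Y).mulVecLin ≤
      LinearMap.range X.mulVecLin ⊔ LinearMap.range Y.mulVecLin := by
    rintro _ ⟨v, rfl⟩
    rw [Matrix.mulVecLin_add]
    exact Submodule.add_mem_sup ⟨v, rfl⟩ ⟨v, rfl⟩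
  exact (Submodule.finrank_mono h).trans (Submodule.finrank_add_le_finrank_add_finrank _ _)

lemma mat_frobenius {l m n o : Type*} [Fintype l] [Fintype m] [Fintype n] [Fintype o]
    (X : Matrix l m ℂ) (M : Matrix m n ℂ) (R : Matrix n o ℂ) (h : X * M * R = 0) :
    (X * M).rank + (M * R).rank ≤ M.rank := by
  classical
  unfold Matrix.rank
  set S := LinearMap.range M.mulVecLin with hS
  let f : S →ₗ[ℂ] (l → ℂ) := X.mulVecLin.comp S.subtype
  have h1 := f.finrank_range_add_finrank_ker
  have h2 : LinearMap.range f = LinearMap.range (X * M).mulVecLin := by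
    rw [Matrix.mulVecLin_mul, LinearMap.range_comp, LinearMap.range_comp, Submodule.range_subtype]
  have h3 : finrank ℂ (LinearMap.range (M * R).mulVecLin) ≤ finrank ℂ (LinearMap.ker f) := by
    have : LinearMap.range (M * R).mulVecLin ≤ (LinearMap.ker f).map S.subtype := by
      rintro _ ⟨v, rfl⟩
      refine ⟨⟨(M * R).mulVecLin v, ⟨R.mulVec v, by simp⟩⟩, ?_, rfl⟩
      simp only [SetLike.mem_coe, LinearMap.mem_ker]
      change X.mulVec ((M * R).mulVec v) = 0
      rw [Matrix.mulVec_mulVec, ← Matrix.mul_assoc, h, Matrix.zero_mulVec]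
    refine (Submodule.finrank_mono this).trans ?_
    exact Submodule.finrank_map_le _ _
  rw [h2] at h1
  omega

lemma mat_factor {m n : Type*} [Fintype m] [Fintype n] [DecidableEq m] (N : Matrix m n ℂ) :
    ∃ (U : Matrix m (Fin N.rank) ℂ) (U' : Matrix (Fin N.rank) m ℂ), U * U' * N = N := by
  classical
  let S := LinearMap.range N.mulVecLin
  obtain ⟨p, hp⟩ := LinearMap.exists_leftInverse_of_injective S.subtype
    (by simp)
  let b : Basis (Fin N.rank) ℂ S := finBasis ℂ S
  refine ⟨LinearMap.toMatrix' (S.subtype.comp b.equivFun.symm.toLinearMap),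
    LinearMap.toMatrix' (b.equivFun.toLinearMap.comp p), ?_⟩
  rw [← LinearMap.toMatrix'_comp]
  apply Matrix.toLin'.injective
  rw [Matrix.toLin'_mul, Matrix.toLin'_toMatrix']
  ext1 v
  ext1
  simp only [LinearMap.comp_apply]
  have : p ((Matrix.toLin' N) (Pi.single v 1)) = ⟨Matrix.toLin' N (Pi.single v 1), ⟨_, rfl⟩⟩ := by
    have := LinearMap.congr_fun hp ⟨Matrix.toLin' N (Pi.single v 1), ⟨_, rfl⟩⟩
    simpa using this
  have hthis := congrArg Subtype.val this
  simpa using hthis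

lemma exists_indep_perturb {E : Type*} [NormedAddCommGroup E] [NormedSpace ℂ E] {κ : Type*}
    [Finite κ] (v w : κ → E) (z : E) (hv : LinearIndependent ℂ v)
    (hz : z ∉ Submodule.span ℂ (Set.range v)) :
    ∃ t : ℂ, t ≠ 0 ∧
      LinearIndependent ℂ (fun o : Option κ => o.casesOn' z (fun l => v l + t • w l)) := by
  let F : ℂ → (Option κ → E) := fun t o => o.casesOn' z (fun l => v l + t • w l)
  have hF : Continuous F := by
    refine continuous_pi fun o => ?_
    cases o with
    | none => exact continuous_const
    | some l =>
      change Continuous fun t : ℂ => v l + t • w l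
      fun_prop
  have h0 : LinearIndependent ℂ (F 0) := by
    have := hv.option hz
    simpa [F] using this
  have h1 := (hF.continuousAt (x := (0 : ℂ))).eventually h0.eventually
  have h2 : ∀ᶠ t in nhdsWithin (0 : ℂ) {0}ᶜ, LinearIndependent ℂ (F t) :=
    h1.filter_mono nhdsWithin_le_nhds
  obtain ⟨t, ht, ht'⟩ := (h2.and self_mem_nhdsWithin).exists
  exact ⟨t, ht', ht⟩

/-- the block matrix with blocks `M i j` -/
def blk {A B C D : Type*} (M : A → B → Matrix C D ℂ) : Matrix (A × C) (B × D) ℂ :=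
  Matrix.of fun p q => M p.1 q.1 p.2 q.2

/-- the block matrix with the blocks rearranged: block `(j, i)` is `M i j` -/
def blkG {A B C D : Type*} (M : A → B → Matrix C D ℂ) : Matrix (B × C) (A × D) ℂ :=
  Matrix.of fun p q => M q.1 p.1 p.2 q.2

end Helpers

section Main

variable {A C D : Type} [Fintype A] [Fintype C] [Fintype D] [DecidableEq A] [DecidableEq C]
  [DecidableEq D]

/-- combination of the block rows with coefficients `x` -/
noncomputable def rowComb {B : Type} (M : A → B → Matrix C D ℂ) (x : A → ℂ) (j : B) :
    Matrix C D ℂ := ∑ i, x i • M i j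

lemma exists_max_row {B : Type} [Fintype B] (M : A → B → Matrix C D ℂ) :
    ∃ x0 : A → ℂ, ∀ x : A → ℂ,
      finrank ℂ (Submodule.span ℂ (Set.range (rowComb M x))) ≤
        finrank ℂ (Submodule.span ℂ (Set.range (rowComb M x0))) := by
  have hb : ∀ x : A → ℂ, finrank ℂ (Submodule.span ℂ (Set.range (rowComb M x))) ≤
      finrank ℂ (Matrix C D ℂ) := fun x => Submodule.finrank_le _
  let f : (A → ℂ) → ℕ := fun x => finrank ℂ (Matrix C D ℂ) -
      finrank ℂ (Submodule.span ℂ (Set.range (rowComb M x)))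
  refine ⟨Function.argmin f, fun x => ?_⟩
  have h := Function.argmin_le f x
  have h1 := hb x
  have h2 := hb (Function.argmin f)
  simp only [f] at h h1 h2 ⊢
  omega

lemma rest_mem {B κ : Type} [Fintype B] [Fintype κ] (M : A → B → Matrix C D ℂ) (x0 : A → ℂ)
    (hmax : ∀ x : A → ℂ,
      finrank ℂ (Submodule.span ℂ (Set.range (rowComb M x))) ≤
        finrank ℂ (Submodule.span ℂ (Set.range (rowComb M x0))))
    (e : κ → B)
    (hspan : Submodule.span ℂ (Set.range (rowComb M x0 ∘ e)) =
      Submodule.span ℂ (Set.range (rowComb M x0)))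
    (hli : LinearIndependent ℂ (rowComb M x0 ∘ e))
    (α : κ → ℂ) (j : B) (hα : ∑ l, α l • rowComb M x0 (e l) = rowComb M x0 j) (i : A) :
    M i j - ∑ l, α l • M i (e l) ∈ Submodule.span ℂ (Set.range (rowComb M x0)) := by
  by_contra hz
  rw [← hspan] at hz
  let : NormedAddCommGroup (Matrix C D ℂ) := Matrix.normedAddCommGroup
  let : NormedSpace ℂ (Matrix C D ℂ) := Matrix.normedSpace
  obtain ⟨t, ht, hli'⟩ := exists_indep_perturb (rowComb M x0 ∘ e) (fun l => M i (e l)) _ hli hz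
  let x : A → ℂ := x0 + t • Pi.single i 1
  have hx : ∀ j', rowComb M x j' = rowComb M x0 j' + t • M i j' := by
    intro j'
    simp [rowComb, x, add_smul, Finset.sum_add_distrib, Pi.single_apply]
  have hmem : ∀ j', rowComb M x j' ∈ Submodule.span ℂ (Set.range (rowComb M x)) :=
    fun j' => Submodule.subset_span ⟨j', rfl⟩
  have hsub : Submodule.span ℂ (Set.range (fun o : Option κ =>
      o.casesOn' (M i j - ∑ l, α l • M i (e l))
        (fun l => (rowComb M x0 ∘ e) l + t • M i (e l)))) ≤
      Submodule.span ℂ (Set.range (rowComb M x)) := by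
    rw [Submodule.span_le]
    rintro _ ⟨o, rfl⟩
    cases o with
    | none =>
      simp only [Option.casesOn'_none, SetLike.mem_coe]
      have h1 : M i j - ∑ l, α l • M i (e l) =
          t⁻¹ • (rowComb M x j - ∑ l, α l • rowComb M x (e l)) := by
        simp only [hx, smul_add, Finset.sum_add_distrib, hα]
        rw [add_sub_add_left_eq_sub]
        simp only [smul_comm _ t, ← Finset.smul_sum]
        rw [← smul_sub, smul_smul, inv_mul_cancel₀ ht, one_smul]
      rw [h1]
      exact Submodule.smul_mem _ _ (Submodule.sub_mem _ (hmem _)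
        (Submodule.sum_mem _ fun l _ => Submodule.smul_mem _ _ (hmem _)))
    | some l =>
      simp only [Option.casesOn'_some, SetLike.mem_coe, Function.comp_apply]
      rw [← hx]
      exact hmem _
  have h1 := Submodule.finrank_mono hsub
  rw [finrank_span_eq_card hli'] at h1
  have h2 := hmax x
  rw [← hspan, finrank_span_eq_card hli] at h2
  rw [Fintype.card_option] at h1
  omega

lemma finrank_map_add_le {E F : Type*} [AddCommGroup E] [Module ℂ E] [FiniteDimensional ℂ E]
    [AddCommGroup F] [Module ℂ F] (φ : E →ₗ[ℂ] F) (V W : Submodule ℂ E) (hVW : V ≤ W)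
    (hV : ∀ v ∈ V, φ v = 0) : finrank ℂ (W.map φ) + finrank ℂ V ≤ finrank ℂ W := by
  let f : W →ₗ[ℂ] F := φ.comp W.subtype
  have h1 := f.finrank_range_add_finrank_ker
  have h2 : LinearMap.range f = W.map φ := by
    rw [LinearMap.range_comp, Submodule.range_subtype]
  have h3 : finrank ℂ V ≤ finrank ℂ (LinearMap.ker f) := by
    have : V ≤ (LinearMap.ker f).map W.subtype := by
      intro v hv
      exact ⟨⟨v, hVW hv⟩, by simpa [f] using hV v hv, rfl⟩
    exact (Submodule.finrank_mono this).trans (Submodule.finrank_map_le _ _)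
  rw [h2] at h1
  omega

theorem main_ineq (n : ℕ) : ∀ (B : Type) [Fintype B] (M : A → B → Matrix C D ℂ)
    (W : Submodule ℂ (Matrix C D ℂ)), (∀ i j, M i j ∈ W) →
    finrank ℂ W + Fintype.card B ≤ n →
    (blkG M).rank ≤ finrank ℂ W * (blk M).rank := by
  classical
  induction n using Nat.strong_induction_on with
  | _ n ih =>
  intro B _ M W hMW hn
  obtain ⟨x0, hmax⟩ := exists_max_row M
  obtain ⟨κ, e, he, hspan, hli⟩ := exists_linearIndependent' ℂ (rowComb M x0)
  have : Finite κ := Finite.of_injective e he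
  have : Fintype κ := Fintype.ofFinite κ
  set V := Submodule.span ℂ (Set.range (rowComb M x0)) with hVdef
  have hdim : finrank ℂ V = Fintype.card κ := by
    rw [← hspan]; exact finrank_span_eq_card hli
  have ha : ∀ j, ∃ α : κ → ℂ, (∑ l, α l • rowComb M x0 (e l) = rowComb M x0 j) ∧
      ∀ l, e l = j → α = Pi.single l 1 := by
    intro j
    by_cases hj : ∃ l, e l = j
    · obtain ⟨l, rfl⟩ := hj
      refine ⟨Pi.single l 1, ?_, ?_⟩
      · simp [Pi.single_apply]
      · intro l' hl'
        rw [he hl']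
    · have : rowComb M x0 j ∈ Submodule.span ℂ (Set.range (rowComb M x0 ∘ e)) := by
        rw [hspan]; exact Submodule.subset_span ⟨j, rfl⟩
      obtain ⟨α, hα⟩ := (Submodule.mem_span_range_iff_exists_fun ℂ).1 this
      exact ⟨α, hα, fun l hl => absurd ⟨l, hl⟩ hj⟩
  choose a ha1 ha2 using ha
  let Lf : A → B → Matrix C D ℂ := fun i j => M i j - ∑ l, a j l • M i (e l)
  have hLV : ∀ i j, Lf i j ∈ V := fun i j =>
    rest_mem M x0 hmax e hspan hli (a j) j (ha1 j) i
  have hLe : ∀ i l, Lf i (e l) = 0 := by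
    intro i l
    simp [Lf, ha2 (e l) l rfl, Pi.single_apply]
  have hVW : V ≤ W := by
    rw [hVdef, Submodule.span_le]
    rintro _ ⟨j, rfl⟩
    exact Submodule.sum_mem _ fun i _ => Submodule.smul_mem _ _ (hMW i j)
  rcases isEmpty_or_nonempty κ with hκ | hκ
  · have hV0 : V = ⊥ := by
      rw [← hspan]; simp
    have hM0 : blkG M = 0 := by
      ext p q
      have := hLV q.1 p.1
      rw [hV0, Submodule.mem_bot] at this
      have h2 : M q.1 p.1 = 0 := by simpa [Lf] using this
      simp [blkG, h2]
    rw [hM0, Matrix.rank_zero]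
    exact Nat.zero_le _
  -- the projection
  let N : Matrix C (B × D) ℂ := Matrix.of fun c q => rowComb M x0 q.1 c q.2
  obtain ⟨U, U', hU⟩ := mat_factor N
  have hPV : ∀ v ∈ V, U * U' * v = v := by
    intro v hv
    induction hv using Submodule.span_induction with
    | mem v h =>
      obtain ⟨j, rfl⟩ := h
      ext c d
      have := congrFun (congrFun hU c) (j, d)
      simpa [Matrix.mul_apply, N] using this
    | zero => simp
    | add v w _ _ hv hw => rw [Matrix.mul_add, hv, hw]
    | smul r v _ hv => rw [Matrix.mul_smul, hv]
  let φ : Matrix C D ℂ →ₗ[ℂ] Matrix C D ℂ :=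
    { toFun := fun v => (1 - U * U') * v
      map_add' := fun v w => Matrix.mul_add _ _ _
      map_smul' := fun r v => Matrix.mul_smul _ _ _ }
  have hφ : ∀ v, φ v = (1 - U * U') * v := fun v => rfl
  have hφV : ∀ v ∈ V, φ v = 0 := by
    intro v hv
    rw [hφ, Matrix.sub_mul, Matrix.one_mul, hPV v hv, sub_self]
  have hdimW := finrank_map_add_le φ V W hVW hφV
  have hdpos : 0 < Fintype.card κ := Fintype.card_pos
  -- first part
  let Mb : A → B → Matrix C D ℂ := fun i j => φ (M i j)
  have h1 : (blkG Mb).rank ≤ finrank ℂ (W.map φ) * (blk Mb).rank :=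
    ih (finrank ℂ (W.map φ) + Fintype.card B) (by omega) B Mb (W.map φ)
      (fun i j => ⟨M i j, hMW i j, rfl⟩) le_rfl
  have h1' : (blk Mb).rank ≤ (blk M).rank := by
    have : blk Mb = (Matrix.kroneckerMap (· * ·) (1 : Matrix A A ℂ) (1 - U * U')) * blk M := by
      ext p q
      simp only [Mb, blk, hφ, Matrix.mul_apply, Matrix.of_apply, Matrix.kroneckerMap_apply,
        Fintype.sum_prod_type, Matrix.one_apply]
      simp
    rw [this]
    exact Matrix.rank_mul_le_right _ _
  -- second part
  let J := {j : B // j ∉ Set.range e}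
  let L : A → J → Matrix C D ℂ := fun i j => Lf i j.1
  have hJ : Fintype.card J < Fintype.card B := by
    obtain ⟨l⟩ := hκ
    exact Fintype.card_subtype_lt (x := e l) (by simp)
  have h2 : (blkG L).rank ≤ finrank ℂ V * (blk L).rank :=
    ih (finrank ℂ V + Fintype.card J) (by
      have := Submodule.finrank_mono hVW
      omega) J L V (fun i j => hLV i j.1) le_rfl
  have hrow0 : ∀ j, ∑ i, x0 i • Lf i j = 0 := by
    intro j
    simp only [Lf, smul_sub, Finset.sum_sub_distrib, Finset.smul_sum]
    rw [Finset.sum_comm, sub_eq_zero]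
    change rowComb M x0 j = _
    rw [← ha1 j]
    refine Finset.sum_congr rfl fun l _ => ?_
    simp only [rowComb, Finset.smul_sum]
    exact Finset.sum_congr rfl fun i _ => smul_comm _ _ _
  have h3 : N.rank + (blk L).rank ≤ (blk M).rank := by
    let X : Matrix C (A × C) ℂ := Matrix.of fun c p => if c = p.2 then x0 p.1 else 0
    let R : Matrix (B × D) (J × D) ℂ := Matrix.of fun p q =>
      if p.2 = q.2 then (if p.1 = q.1.1 then 1 else 0) -
        ∑ l, a q.1.1 l * (if p.1 = e l then 1 else 0) else 0
    have hX : X * blk M = N := by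
      ext c q
      simp [X, blk, N, rowComb, Matrix.mul_apply, Fintype.sum_prod_type, Matrix.sum_apply]
    have hR : blk M * R = blk L := by
      ext p q
      simp only [R, blk, L, Lf, Matrix.mul_apply, Fintype.sum_prod_type, Matrix.sum_apply,
        Matrix.of_apply, Matrix.sub_apply, Matrix.smul_apply, smul_eq_mul]
      simp only [mul_ite, mul_zero, Finset.sum_ite_eq', Finset.mem_univ, if_true, mul_sub,
        Finset.sum_sub_distrib, mul_one, Finset.mul_sum]
      congr 1
      rw [Finset.sum_comm]
      refine Finset.sum_congr rfl fun l _ => ?_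
      simp [mul_comm]
    have hXR : X * blk M * R = 0 := by
      rw [Matrix.mul_assoc, hR]
      ext c q
      have := congrFun (congrFun (hrow0 q.1.1) c) q.2
      simpa [X, blk, L, Matrix.mul_apply, Fintype.sum_prod_type, Matrix.sum_apply] using this
    have := mat_frobenius X (blk M) R hXR
    rwa [hX, hR] at this
  -- assembling
  let Z1a : Matrix (B × C) (κ × Fin N.rank) ℂ := Matrix.of fun p q => a p.1 q.1 * U p.2 q.2
  let Z1b : Matrix (κ × Fin N.rank) (A × D) ℂ := Matrix.of fun p q => (U' * M q.1 (e p.1)) p.2 q.2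
  let Z2 : Matrix (B × C) (A × D) ℂ := blkG Lf
  have hsum : blkG M = blkG Mb + (Z1a * Z1b + Z2) := by
    ext p q
    have hM : M q.1 p.1 = φ (M q.1 p.1) +
        (∑ l, a p.1 l • (U * (U' * M q.1 (e l))) + Lf q.1 p.1) := by
      have e1 : U * U' * M q.1 p.1 =
          ∑ l, a p.1 l • (U * (U' * M q.1 (e l))) + Lf q.1 p.1 := by
        conv_rhs => rw [← hPV _ (hLV q.1 p.1)]
        simp only [Lf, Matrix.mul_sub, Matrix.mul_sum, Matrix.mul_smul, Matrix.mul_assoc]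
        abel
      rw [← e1, hφ, Matrix.sub_mul, Matrix.one_mul, sub_add_cancel]
    have hM' := congrFun (congrFun hM p.2) q.2
    have hZ : (Z1a * Z1b) p q = (∑ l, a p.1 l • (U * (U' * M q.1 (e l)))) p.2 q.2 := by
      simp only [Matrix.mul_apply (M := Z1a), Fintype.sum_prod_type, Matrix.sum_apply,
        Matrix.smul_apply, smul_eq_mul, Z1a, Z1b, Matrix.of_apply]
      refine Finset.sum_congr rfl fun l _ => ?_
      rw [Matrix.mul_apply (M := U), Finset.mul_sum]
      exact Finset.sum_congr rfl fun u _ => mul_assoc _ _ _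
    rw [Matrix.add_apply, Matrix.add_apply, hZ]
    exact hM'
  have hZ1 : (Z1a * Z1b).rank ≤ Fintype.card κ * N.rank := by
    refine (Matrix.rank_mul_le_left _ _).trans ((Matrix.rank_le_card_width _).trans ?_)
    simp
  have hZ2 : Z2.rank ≤ (blkG L).rank := by
    let I : Matrix (B × C) (J × C) ℂ := Matrix.of fun p q =>
      if p.2 = q.2 then (if p.1 = q.1.1 then 1 else 0) else 0
    have : Z2 = I * blkG L := by
      ext p q
      simp only [Z2, I, blkG, L, Matrix.mul_apply, Fintype.sum_prod_type, Matrix.of_apply,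
        ite_mul, zero_mul, one_mul, Finset.sum_ite_eq, Finset.mem_univ, if_true]
      by_cases hp : p.1 ∈ Set.range e
      · obtain ⟨l, hl⟩ := hp
        rw [← hl, hLe]
        symm
        refine Finset.sum_eq_zero fun j _ => ?_
        rw [if_neg]
        intro h
        exact j.2 ⟨l, h⟩
      · rw [Finset.sum_eq_single (⟨p.1, hp⟩ : J)]
        · simp
        · intro j _ hj
          rw [if_neg]
          intro h
          exact hj (Subtype.ext h.symm)
        · simp
    rw [this]
    exact Matrix.rank_mul_le_right _ _
  have h4 : (blkG M).rank ≤ (blkG Mb).rank + ((Z1a * Z1b).rank + Z2.rank) := by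
    rw [hsum]
    exact (mat_rank_add_le _ _).trans (Nat.add_le_add_left (mat_rank_add_le _ _) _)
  rw [hdim] at h2 hdimW
  calc (blkG M).rank ≤ finrank ℂ (W.map φ) * (blk M).rank +
        (Fintype.card κ * N.rank + Fintype.card κ * (blk L).rank) := by
        have := Nat.mul_le_mul_left (finrank ℂ (W.map φ)) h1'
        omega
    _ = finrank ℂ (W.map φ) * (blk M).rank + Fintype.card κ * (N.rank + (blk L).rank) := by ring
    _ ≤ finrank ℂ (W.map φ) * (blk M).rank + Fintype.card κ * (blk M).rank := by gcongr
    _ = (finrank ℂ (W.map φ) + Fintype.card κ) * (blk M).rank := by ring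
    _ ≤ finrank ℂ W * (blk M).rank := by gcongr

end Main

theorem stmt4 (a b c : ℕ) (ρ : Matrix (Fin a × Fin b × Fin c) (Fin a × Fin b × Fin c) ℂ)
    (hρ : ρ.PosSemidef) (hAB : (rhoAB ρ).rank ≤ 3) :
    (rhoBC ρ).rank ≤ (rhoAB ρ).rank * (rhoAC ρ).rank := by
  classical
  obtain ⟨Y, hY⟩ : ∃ Y : Matrix (Fin a × Fin b × Fin c) (Fin a × Fin b × Fin c) ℂ,
      ρ = Yᴴ * Y := by
    open scoped MatrixOrder in
    exact CStarAlgebra.nonneg_iff_eq_star_mul_self.mp hρ.nonneg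
  let M : Fin a → Fin b → Matrix (Fin c) (Fin a × Fin b × Fin c) ℂ := fun i j =>
    Matrix.of fun k d => Y d (i, j, k)
  have hBC : rhoBC ρ = ((blkG M)ᵀ)ᴴ * (blkG M)ᵀ := by
    ext p q
    simp only [rhoBC, blkG, M, hY, Matrix.mul_apply, Matrix.of_apply, Fintype.sum_prod_type (α₁ := Fin a) (α₂ := Fin a × Fin b × Fin c),
      Matrix.conjTranspose_apply, Matrix.transpose_apply]
  have hAC : rhoAC ρ = ((blk M)ᵀ)ᴴ * (blk M)ᵀ := by
    ext p q
    simp only [rhoAC, blk, M, hY, Matrix.mul_apply, Matrix.of_apply, Fintype.sum_prod_type (α₁ := Fin b) (α₂ := Fin a × Fin b × Fin c),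
      Matrix.conjTranspose_apply, Matrix.transpose_apply]
  let Z : Matrix (Fin c × (Fin a × Fin b × Fin c)) (Fin a × Fin b) ℂ :=
    Matrix.of fun p q => M q.1 q.2 p.1 p.2
  have hAB' : rhoAB ρ = Zᴴ * Z := by
    ext p q
    simp only [rhoAB, Z, M, hY, Matrix.mul_apply, Matrix.of_apply, Fintype.sum_prod_type (α₁ := Fin c) (α₂ := Fin a × Fin b × Fin c),
      Matrix.conjTranspose_apply]
  rw [hBC, hAC, hAB', Matrix.rank_conjTranspose_mul_self, Matrix.rank_conjTranspose_mul_self,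
    Matrix.rank_conjTranspose_mul_self, Matrix.rank_transpose, Matrix.rank_transpose]
  let W : Submodule ℂ (Matrix (Fin c) (Fin a × Fin b × Fin c) ℂ) :=
    Submodule.span ℂ (Set.range fun q : Fin a × Fin b => M q.1 q.2)
  have hW : finrank ℂ W ≤ Z.rank := by
    rw [Matrix.rank_eq_finrank_span_cols]
    let ψ : (Fin c × (Fin a × Fin b × Fin c) → ℂ) →ₗ[ℂ] Matrix (Fin c) (Fin a × Fin b × Fin c) ℂ :=
      { toFun := fun v => Matrix.of fun k d => v (k, d)
        map_add' := fun _ _ => rfl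
        map_smul' := fun _ _ => rfl }
    have : W = (Submodule.span ℂ (Set.range Z.col)).map ψ := by
      rw [Submodule.map_span, ← Set.range_comp]
      rfl
    rw [this]
    exact Submodule.finrank_map_le _ _
  refine (main_ineq _ (Fin b) M W (fun i j => Submodule.subset_span ⟨(i, j), rfl⟩) le_rfl).trans ?_
  exact Nat.mul_le_mul_right _ hW
end

section
/- Let ρ be a positive semidefinite Hermitian complex matrix indexed by (Fin a × Fin b × Fin c) × (Fin a × Fin b × Fin c), with bipartite reduced matrices ρ_AB, ρ_AC, ρ_BC obtained by partial trace. If rank(ρ_AB) = 2 and rank(ρ_AC) = 2, then rank(ρ_BC) ≤ 4. -/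
open Matrix
open scoped ComplexOrder

open scoped Kronecker

theorem rank_fact {m n : Type*} [Fintype m] [Fintype n] [DecidableEq m] [DecidableEq n]
    (N : Matrix m n ℂ) : ∃ (P : Matrix m (Fin N.rank) ℂ) (L : Matrix (Fin N.rank) m ℂ),
      P * (L * N) = N := by
  have e : (LinearMap.range N.mulVecLin) ≃ₗ[ℂ] (Fin N.rank → ℂ) :=
    LinearEquiv.ofFinrankEq _ _ (by rw [Module.finrank_fin_fun]; rfl)
  obtain ⟨g, hg⟩ := LinearMap.exists_leftInverse_of_injective
    (LinearMap.range N.mulVecLin).subtype (by simp)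
  refine ⟨LinearMap.toMatrix' ((LinearMap.range N.mulVecLin).subtype ∘ₗ e.symm.toLinearMap),
    LinearMap.toMatrix' (e.toLinearMap ∘ₗ g), ?_⟩
  apply Matrix.toLin'.injective
  ext1 v
  ext1
  have h1 : g (N *ᵥ (Pi.single v 1)) = ⟨N *ᵥ (Pi.single v 1), ⟨_, rfl⟩⟩ :=
    LinearMap.congr_fun hg ⟨N *ᵥ (Pi.single v 1), ⟨_, rfl⟩⟩
  have h2 : N.col v = N *ᵥ (Pi.single v 1) := by simp
  simp only [Matrix.toLin'_mul, Matrix.toLin'_toMatrix', LinearMap.comp_apply, Matrix.toLin'_apply,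
    LinearMap.single_apply, LinearEquiv.coe_coe]
  rw [h1]
  simp

theorem rank_fact2 {m n : Type*} [Fintype m] [Fintype n] [DecidableEq m] [DecidableEq n]
    (N : Matrix m n ℂ) (r : ℕ) (h : N.rank = r) : ∃ (P : Matrix m (Fin r) ℂ)
      (Q : Matrix (Fin r) n ℂ), P * Q = N := by
  subst h
  obtain ⟨P, L, h⟩ := rank_fact N
  exact ⟨P, _, h⟩

theorem rank_prod_aux {m n ι : Type*} [Fintype m] [Fintype n] [DecidableEq m] [DecidableEq n]
    [Fintype ι] [DecidableEq ι] (N : Matrix (m × n) ι ℂ) {r s : ℕ}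
    (h1 : (Matrix.of fun (j : m) (q : n × ι) => N (j, q.1) q.2).rank ≤ r)
    (h2 : (Matrix.of fun (k : n) (q : m × ι) => N (q.1, k) q.2).rank ≤ s) :
    N.rank ≤ r * s := by
  obtain ⟨P, L, hP⟩ := rank_fact (Matrix.of fun (j : m) (q : n × ι) => N (j, q.1) q.2)
  obtain ⟨P', L', hP'⟩ := rank_fact (Matrix.of fun (k : n) (q : m × ι) => N (q.1, k) q.2)
  have key : N = (P ⊗ₖ P') * ((L ⊗ₖ L') * N) := by
    rw [← Matrix.mul_assoc, ← Matrix.mul_kronecker_mul]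
    rw [← Matrix.mul_assoc] at hP hP'
    ext ⟨j, k⟩ e
    have e1 : ∀ k, _ := fun k => congrFun (congrFun hP j) (k, e)
    have e2 : ∀ j, _ := fun j => congrFun (congrFun hP' k) (j, e)
    simp only [Matrix.mul_apply (M := P * L), Matrix.mul_apply (M := P' * L'), Matrix.of_apply] at e1 e2
    rw [Matrix.mul_apply, Fintype.sum_prod_type, ← e1]
    refine Finset.sum_congr rfl fun j' _ => ?_
    rw [← e2, Finset.mul_sum]
    refine Finset.sum_congr rfl fun k' _ => ?_
    simp [Matrix.kroneckerMap_apply, mul_assoc]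
  rw [key]
  refine (Matrix.rank_mul_le_left _ _).trans ((Matrix.rank_le_card_width _).trans ?_)
  simpa using Nat.mul_le_mul h1 h2

theorem local_dep {V W : Type*} [AddCommGroup V] [Module ℂ V] [AddCommGroup W] [Module ℂ W]
    (F G : V →ₗ[ℂ] W) (h : ∀ x, ∃ p q : ℂ, (p ≠ 0 ∨ q ≠ 0) ∧ p • F x + q • G x = 0) :
    (∃ p q : ℂ, (p ≠ 0 ∨ q ≠ 0) ∧ ∀ x, p • F x + q • G x = 0) ∨
    (∃ w : W, ∀ x, (∃ s : ℂ, F x = s • w) ∧ ∃ t : ℂ, G x = t • w) := by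
  have hG : ∀ x, F x ≠ 0 → ∃ t : ℂ, G x = t • F x := by
    intro x hx
    obtain ⟨p, q, hpq, e⟩ := h x
    have hq : q ≠ 0 := by
      rintro rfl
      simp [hx] at e
      simp [e] at hpq
    refine ⟨-(q⁻¹ * p), ?_⟩
    have : q⁻¹ • (p • F x + q • G x) = 0 := by rw [e, smul_zero]
    rw [smul_add, smul_smul, smul_smul, inv_mul_cancel₀ hq, one_smul] at this
    rw [neg_smul]
    exact (neg_eq_of_add_eq_zero_right this).symm
  by_cases hr : ∃ x y, LinearIndependent ℂ ![F x, F y]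
  · obtain ⟨x, y, hxy⟩ := hr
    left
    have hx : F x ≠ 0 := by simpa using hxy.ne_zero 0
    have hy : F y ≠ 0 := by simpa using hxy.ne_zero 1
    rw [LinearIndependent.pair_iff] at hxy
    have hxy' : F (x + y) ≠ 0 := by
      intro h0
      have := hxy 1 1 (by simpa using h0)
      simp at this
    obtain ⟨l, hl⟩ := hG x hx
    obtain ⟨m, hm⟩ := hG y hy
    obtain ⟨n, hn⟩ := hG _ hxy'
    rw [map_add, map_add, hl, hm] at hn
    have h3 := hxy (l - n) (m - n) (by
      rw [sub_smul, sub_smul]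
      rw [smul_add] at hn
      have := sub_eq_zero.mpr hn
      rw [← this]; abel)
    have hlm : m = l := by
      have := h3.1; have := h3.2; grind
    subst hlm
    refine ⟨-m, 1, by simp, fun z => ?_⟩
    by_contra hz
    have hF : ∀ z', -m • F z' + (1:ℂ) • G z' = -m • F z + (1:ℂ) • G z →
        ∃ t : ℂ, F z' = t • (-m • F z + (1:ℂ) • G z) := by
      intro z' hz'
      by_cases h0 : F z' = 0
      · exact ⟨0, by simp [h0]⟩
      obtain ⟨t, ht⟩ := hG z' h0
      rw [← hz'] at hz ⊢
      rw [ht] at hz ⊢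
      rw [one_smul, ← add_smul] at hz ⊢
      have : -m + t ≠ 0 := by
        intro h; rw [h] at hz; simp at hz
      exact ⟨(-m+t)⁻¹, by rw [smul_smul, inv_mul_cancel₀ this, one_smul]⟩
    obtain ⟨t0, h0⟩ := hF z rfl
    obtain ⟨t1, h1⟩ := hF (z + x) (by simp only [map_add, hl]; module)
    obtain ⟨t2, h2⟩ := hF (z + y) (by simp only [map_add, hm]; module)
    generalize -m • F z + (1:ℂ) • G z = u at *
    have h1' : F x = (t1 - t0) • u := by
      rw [sub_smul, ← h1, ← h0]; simp
    have h2' : F y = (t2 - t0) • u := by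
      rw [sub_smul, ← h2, ← h0]; simp
    have h4 := hxy (t2 - t0) (-(t1 - t0)) (by rw [h1', h2']; module)
    have : t1 - t0 = 0 := by linear_combination -h4.2
    rw [this] at h1'
    simp at h1'
    exact hx h1'
  · push Not at hr
    by_cases hF : ∃ x, F x ≠ 0
    · obtain ⟨x0, hx0⟩ := hF
      right
      have hs : ∀ x, ∃ s : ℂ, F x = s • F x0 := by
        intro x
        have := hr x0 x
        rw [LinearIndependent.pair_iff' hx0] at this
        push Not at this
        obtain ⟨s, hs⟩ := this
        exact ⟨s, hs.symm⟩
      refine ⟨F x0, fun x => ⟨hs x, ?_⟩⟩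
      by_cases hx : F x = 0
      · obtain ⟨t, ht⟩ := hG x0 hx0
        obtain ⟨t', ht'⟩ := hG (x + x0) (by simpa [hx] using hx0)
        refine ⟨t' - t, ?_⟩
        rw [map_add, map_add, hx, zero_add, ht] at ht'
        rw [sub_smul, ← ht']; simp
      · obtain ⟨t, ht⟩ := hG x hx
        obtain ⟨s, hs⟩ := hs x
        exact ⟨t * s, by rw [ht, hs, smul_smul]⟩
    · push Not at hF
      left
      exact ⟨1, 0, by simp, fun x => by simp [hF x]⟩

theorem half_lemma {α β γ δ : Type*} [Fintype α] [Fintype β] [Fintype γ] [Fintype δ]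
    [DecidableEq α] [DecidableEq β] [DecidableEq γ] [DecidableEq δ] (T : α → β → γ → δ → ℂ)
    (hAB : (Matrix.of fun (p : α × β) (q : γ × δ) => T p.1 p.2 q.1 q.2).rank = 2)
    (hAC : (Matrix.of fun (p : α × γ) (q : β × δ) => T p.1 q.1 p.2 q.2).rank = 2) :
    (Matrix.of fun (p : β × γ) (q : α × δ) => T q.1 p.1 p.2 q.2).rank ≤ 4 ∨
    (Matrix.of fun (i : α) (q : δ × (β × γ)) => T i q.2.1 q.2.2 q.1).rank ≤ 2 := by
  obtain ⟨P, Q, hPQ⟩ := rank_fact2 _ 2 hAB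
  have hT : ∀ i j k d, T i j k d = P (i, j) 0 * Q 0 (k, d) + P (i, j) 1 * Q 1 (k, d) := by
    intro i j k d
    have := congrFun (congrFun hPQ (i, j)) (k, d)
    simpa [Matrix.mul_apply] using this.symm
  let F : (γ → ℂ) →ₗ[ℂ] (δ → ℂ) := (Matrix.of fun k d => Q 0 (k, d)).vecMulLinear
  let G : (γ → ℂ) →ₗ[ℂ] (δ → ℂ) := (Matrix.of fun k d => Q 1 (k, d)).vecMulLinear
  by_cases hind : ∃ x, LinearIndependent ℂ ![F x, G x]
  · right
    obtain ⟨x, hx⟩ := hind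
    obtain ⟨g, hg⟩ := LinearMap.exists_leftInverse_of_injective
      (Fintype.linearCombination ℂ ![F x, G x]) (LinearMap.ker_eq_bot.mpr hx.fintypeLinearCombination_injective)
    have hg0 : g (F x) = Pi.single 0 1 := by
      have := LinearMap.congr_fun hg (Pi.single 0 1)
      simpa [Fintype.linearCombination_apply] using this
    have hg1 : g (G x) = Pi.single 1 1 := by
      have := LinearMap.congr_fun hg (Pi.single 1 1)
      simpa [Fintype.linearCombination_apply] using this
    let Y := LinearMap.toMatrix' g
    have hY : ∀ v e, g v e = ∑ d, Y e d * v d := by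
      intro v e
      have : g v = Y *ᵥ v := by simp [Y, ← Matrix.toLin'_apply]
      rw [this]; rfl
    have hTx : ∀ i j, (fun d => ∑ k, x k * T i j k d) = P (i, j) 0 • F x + P (i, j) 1 • G x := by
      intro i j
      ext d
      simp only [hT, F, G, Matrix.vecMulLinear_apply, Matrix.vecMul, dotProduct, Matrix.of_apply,
        Pi.add_apply, Pi.smul_apply, smul_eq_mul, Finset.mul_sum, ← Finset.sum_add_distrib]
      exact Finset.sum_congr rfl fun k _ => by ring
    have hP : ∀ i j e, P (i, j) e = ∑ d, Y e d * ∑ k, x k * T i j k d := by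
      intro i j e
      rw [← hY (fun d => ∑ k, x k * T i j k d), hTx, map_add, map_smul, map_smul, hg0, hg1]
      fin_cases e <;> simp
    let U : Matrix α (α × γ) ℂ := Matrix.of fun i q => if i = q.1 then x q.2 else 0
    let V : Matrix (β × δ) (δ × (β × γ)) ℂ := Matrix.of fun p q =>
      if p.1 = q.2.1 then Y 0 p.2 * Q 0 (q.2.2, q.1) + Y 1 p.2 * Q 1 (q.2.2, q.1) else 0
    have key : (Matrix.of fun (i : α) (q : δ × (β × γ)) => T i q.2.1 q.2.2 q.1) =
        U * (Matrix.of fun (p : α × γ) (q : β × δ) => T p.1 q.1 p.2 q.2) * V := by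
      ext i ⟨d, j, k⟩
      have hU : ∀ j' d', (U * (Matrix.of fun (p : α × γ) (q : β × δ) => T p.1 q.1 p.2 q.2)) i (j', d')
          = ∑ k, x k * T i j' k d' := by
        intro j' d'
        simp [U, Matrix.mul_apply, Fintype.sum_prod_type, ite_mul]
      rw [Matrix.mul_apply, Fintype.sum_prod_type]
      simp only [hU, V, Matrix.of_apply, mul_ite, mul_zero]
      rw [Finset.sum_comm]
      simp only [Finset.sum_ite_eq', Finset.mem_univ, if_true]
      rw [hT, hP, hP, Finset.sum_mul, Finset.sum_mul, ← Finset.sum_add_distrib]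
      exact Finset.sum_congr rfl fun k _ => by ring
    rw [key, ← hAC]
    exact (Matrix.rank_mul_le_left _ _).trans (Matrix.rank_mul_le_right _ _)
  · left
    push Not at hind
    have hFs : ∀ k, F (Pi.single k 1) = fun d => Q 0 (k, d) := by
      intro k; ext d; simp [F]
    have hGs : ∀ k, G (Pi.single k 1) = fun d => Q 1 (k, d) := by
      intro k; ext d; simp [G]
    rcases local_dep F G (fun x => by
      have := hind x
      rw [LinearIndependent.pair_iff] at this
      push Not at this
      obtain ⟨p, q, h1, h2⟩ := this
      exact ⟨p, q, by tauto, h1⟩) with ⟨p, q, hpq, h0⟩ | ⟨w, hw⟩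
    · exfalso
      have h0' : ∀ k d, p * Q 0 (k, d) + q * Q 1 (k, d) = 0 := by
        intro k d
        have := congrFun (h0 (Pi.single k 1)) d
        simpa [hFs, hGs] using this
      have hfin : ∀ (u : α × β → ℂ) (v : γ × δ → ℂ), (∀ i j k d, T i j k d = u (i, j) * v (k, d)) →
          False := by
        intro u v huv
        have : (Matrix.of fun (p : α × β) (q : γ × δ) => T p.1 p.2 q.1 q.2) = vecMulVec u v := by
          ext ⟨i, j⟩ ⟨k, d⟩
          simp [huv, vecMulVec_apply]
        have h2 := rank_vecMulVec_le u v
        rw [← this, hAB] at h2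
        omega
      rcases hpq with hp | hq
      · refine hfin (fun y => -(q / p) * P y 0 + P y 1) (Q 1) fun i j k d => ?_
        rw [hT]
        have : Q 0 (k, d) = -(q / p) * Q 1 (k, d) := by
          field_simp; linear_combination h0' k d
        rw [this]; ring
      · refine hfin (fun y => P y 0 - (p / q) * P y 1) (Q 0) fun i j k d => ?_
        rw [hT]
        have : Q 1 (k, d) = -(p / q) * Q 0 (k, d) := by
          field_simp; linear_combination h0' k d
        rw [this]; ring
    · have hs : ∀ k, ∃ s : ℂ, ∀ d, Q 0 (k, d) = s * w d := fun k => by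
        obtain ⟨s, hs⟩ := (hw (Pi.single k 1)).1
        rw [hFs] at hs
        exact ⟨s, fun d => congrFun hs d⟩
      have ht : ∀ k, ∃ s : ℂ, ∀ d, Q 1 (k, d) = s * w d := fun k => by
        obtain ⟨s, hs⟩ := (hw (Pi.single k 1)).2
        rw [hGs] at hs
        exact ⟨s, fun d => congrFun hs d⟩
      choose s hs using hs
      choose t ht using ht
      by_cases hw0 : ∃ d0, w d0 ≠ 0
      · obtain ⟨d0, hd0⟩ := hw0
        obtain ⟨P', Q', hPQ'⟩ := rank_fact2 _ 2 hAC
        have hT' : ∀ i j k d, T i j k d =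
            P' (i, k) 0 * Q' 0 (j, d) + P' (i, k) 1 * Q' 1 (j, d) := by
          intro i j k d
          have := congrFun (congrFun hPQ' (i, k)) (j, d)
          simpa [Matrix.mul_apply] using this.symm
        have hTd : ∀ i j k d, T i j k d = T i j k d0 * (w d / w d0) := by
          intro i j k d
          rw [hT, hT, hs, hs, ht, ht]
          field_simp
        refine rank_prod_aux (r := 2) (s := 2) _ ?_ ?_
        · have : (Matrix.of fun (j : β) (q : γ × (α × δ)) => T q.2.1 j q.1 q.2.2) =
            (Matrix.of fun (j : β) (e : Fin 2) => Q' e (j, d0)) *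
            (Matrix.of fun (e : Fin 2) (q : γ × (α × δ)) =>
              P' (q.2.1, q.1) e * (w q.2.2 / w d0)) := by
            ext j ⟨k, i, d⟩
            simp only [Matrix.mul_apply, Matrix.of_apply, Fin.sum_univ_two]
            rw [hTd, hT']; ring
          simp only [Matrix.of_apply]
          rw [this]
          exact (Matrix.rank_mul_le_left _ _).trans ((Matrix.rank_le_card_width _).trans (by simp))
        · have : (Matrix.of fun (k : γ) (q : β × (α × δ)) => T q.2.1 q.1 k q.2.2) =
            (Matrix.of fun (k : γ) (e : Fin 2) => ![s k, t k] e) *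
            (Matrix.of fun (e : Fin 2) (q : β × (α × δ)) =>
              P (q.2.1, q.1) e * w q.2.2) := by
            ext k ⟨j, i, d⟩
            simp [Matrix.mul_apply, Matrix.of_apply, Fin.sum_univ_two]
            rw [hT, hs, ht]; ring
          simp only [Matrix.of_apply]
          rw [this]
          exact (Matrix.rank_mul_le_left _ _).trans ((Matrix.rank_le_card_width _).trans (by simp))
      · push Not at hw0
        have : (Matrix.of fun (p : β × γ) (q : α × δ) => T q.1 p.1 p.2 q.2) = 0 := by
          ext ⟨j, k⟩ ⟨i, d⟩
          simp [hT, hs, ht, hw0]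
        rw [this]; simp

theorem pure_lemma {α β γ δ : Type*} [Fintype α] [Fintype β] [Fintype γ] [Fintype δ]
    [DecidableEq α] [DecidableEq β] [DecidableEq γ] [DecidableEq δ] (T : α → β → γ → δ → ℂ)
    (hAB : (Matrix.of fun (p : α × β) (q : γ × δ) => T p.1 p.2 q.1 q.2).rank = 2)
    (hAC : (Matrix.of fun (p : α × γ) (q : β × δ) => T p.1 q.1 p.2 q.2).rank = 2) :
    (Matrix.of fun (p : β × γ) (q : α × δ) => T q.1 p.1 p.2 q.2).rank ≤ 4 := by
  rcases half_lemma T hAB hAC with h | hA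
  · exact h
  have hAB' : (Matrix.of fun (p : δ × γ) (q : β × α) => T q.2 q.1 p.2 p.1).rank = 2 := by
    rw [← hAB, ← Matrix.rank_transpose (Matrix.of fun (p : α × β) (q : γ × δ) => T p.1 p.2 q.1 q.2),
      ← Matrix.rank_submatrix _ (Equiv.prodComm δ γ) (Equiv.prodComm β α)]
    rfl
  have hAC' : (Matrix.of fun (p : δ × β) (q : γ × α) => T q.2 p.2 q.1 p.1).rank = 2 := by
    rw [← hAC, ← Matrix.rank_transpose (Matrix.of fun (p : α × γ) (q : β × δ) => T p.1 q.1 p.2 q.2),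
      ← Matrix.rank_submatrix _ (Equiv.prodComm δ β) (Equiv.prodComm γ α)]
    rfl
  rcases half_lemma (fun d k j i => T i j k d) hAB' hAC' with h | hD
  · exact (Matrix.rank_submatrix_le (Matrix.of fun (p : γ × β) (q : δ × α) => T q.2 p.2 p.1 q.1)
      Prod.swap Prod.swap).trans h
  have hD' : (Matrix.of fun (d : δ) (q : α × (β × γ)) => T q.1 q.2.1 q.2.2 d).rank ≤ 2 :=
    (Matrix.rank_submatrix_le (Matrix.of fun (d : δ) (q : α × (γ × β)) => T q.1 q.2.2 q.2.1 d)
      id (fun q : α × (β × γ) => (q.1, (q.2.2, q.2.1)))).trans hD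
  have hN := rank_prod_aux (Matrix.of fun (p : α × δ) (q : β × γ) => T p.1 q.1 q.2 p.2) hA hD'
  rw [← Matrix.rank_transpose] at hN
  exact hN

theorem stmt5 (a b c : ℕ) (ρ : Matrix (Fin a × Fin b × Fin c) (Fin a × Fin b × Fin c) ℂ)
    (hρ : ρ.PosSemidef) (hAB : (rhoAB ρ).rank = 2) (hAC : (rhoAC ρ).rank = 2) :
    (rhoBC ρ).rank ≤ 4 := by
  obtain ⟨m, v, hv⟩ := Matrix.posSemidef_iff_eq_sum_vecMulVec.mp hρ
  have hρe : ∀ p q, ρ p q = ∑ d, v d p * star (v d q) := by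
    intro p q
    rw [hv]
    simp [Matrix.sum_apply, vecMulVec_apply]
  have e1 : rhoAB ρ = (Matrix.of fun (p : Fin a × Fin b) (q : Fin c × Fin m) => v q.2 (p.1, p.2, q.1)) *
      (Matrix.of fun (p : Fin a × Fin b) (q : Fin c × Fin m) => v q.2 (p.1, p.2, q.1))ᴴ := by
    ext p q
    simp [rhoAB, Matrix.mul_apply, Fintype.sum_prod_type, hρe]
  have e2 : rhoAC ρ = (Matrix.of fun (p : Fin a × Fin c) (q : Fin b × Fin m) => v q.2 (p.1, q.1, p.2)) *
      (Matrix.of fun (p : Fin a × Fin c) (q : Fin b × Fin m) => v q.2 (p.1, q.1, p.2))ᴴ := by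
    ext p q
    simp [rhoAC, Matrix.mul_apply, Fintype.sum_prod_type, hρe]
  have e3 : rhoBC ρ = (Matrix.of fun (p : Fin b × Fin c) (q : Fin a × Fin m) => v q.2 (q.1, p.1, p.2)) *
      (Matrix.of fun (p : Fin b × Fin c) (q : Fin a × Fin m) => v q.2 (q.1, p.1, p.2))ᴴ := by
    ext p q
    simp [rhoBC, Matrix.mul_apply, Fintype.sum_prod_type, hρe]
  rw [e1, Matrix.rank_self_mul_conjTranspose] at hAB
  rw [e2, Matrix.rank_self_mul_conjTranspose] at hAC
  rw [e3, Matrix.rank_self_mul_conjTranspose]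
  exact pure_lemma (fun i j k d => v d (i, j, k)) hAB hAC
end

section
/- Let ρ be a positive semidefinite Hermitian complex matrix indexed by (Fin a × Fin b × Fin c) × (Fin a × Fin b × Fin c), with bipartite reduced matrices ρ_AB, ρ_AC, ρ_BC obtained by partial trace. If rank(ρ_AB) ≤ 3 and max(b, c) ≥ rank(ρ_AB) · rank(ρ_AC), then rank(ρ_BC) ≤ max(b, c). -/
open Matrix
open scoped ComplexOrder

open Module

section Helpers

variable {ι D V B : Type} [Fintype D] [DecidableEq D]
  [AddCommGroup V] [Module ℂ V] [FiniteDimensional ℂ V]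
  [AddCommGroup B] [Module ℂ B] [FiniteDimensional ℂ B]

/-- The sum of the images of `S` under a family of maps acting coordinatewise. -/
def actSub (D : Type) (P : ι → V →ₗ[ℂ] B) (S : Submodule ℂ (D → V)) : Submodule ℂ (D → B) :=
  ⨆ i, S.map ((P i).compLeft D)

/-- The elementary operation `1 + E_{x y}` on coordinates. -/
def elemOp (V : Type) [AddCommGroup V] [Module ℂ V] (x y : D) : (D → V) →ₗ[ℂ] (D → V) :=
  LinearMap.id + (LinearMap.single ℂ (fun _ : D => V) x) ∘ₗ (LinearMap.proj y)


theorem elemOp_inj (x y : D) : Function.Injective (elemOp V x y) := by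
  rw [← LinearMap.ker_eq_bot, LinearMap.ker_eq_bot']
  intro m hm
  have h : ∀ z, m z + (Pi.single x (m y) : D → V) z = 0 := fun z => by
    have := congrFun hm z
    simpa [elemOp] using this
  have hy : m y = 0 := by
    have := h y
    by_cases hxy : y = x
    · subst hxy
      simp only [Pi.single_eq_same] at this
      rw [← two_smul ℂ] at this
      simpa using this
    · simpa [Pi.single_eq_of_ne hxy] using this
  funext z
  have := h z
  simpa [hy] using this


theorem actSub_elemOp (P : ι → V →ₗ[ℂ] B) (S : Submodule ℂ (D → V)) (x y : D) :
    actSub D P (S.map (elemOp V x y)) = (actSub D P S).map (elemOp B x y) := by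
  unfold actSub
  rw [Submodule.map_iSup]
  congr 1
  funext i
  rw [← Submodule.map_comp, ← Submodule.map_comp]
  congr 1
  ext v z w
  simp only [elemOp, LinearMap.comp_apply, LinearMap.add_apply, LinearMap.id_apply,
    LinearMap.compLeft_apply, Function.comp_apply, Pi.add_apply, map_add, LinearMap.coe_single,
    LinearMap.proj_apply]
  congr 1
  by_cases h : w = x
  · subst h; simp
  · simp [Pi.single_eq_of_ne h]


theorem actSub_sup (P : ι → V →ₗ[ℂ] B) (S T : Submodule ℂ (D → V)) :
    actSub D P (S ⊔ T) = actSub D P S ⊔ actSub D P T := by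
  simp only [actSub, Submodule.map_sup, iSup_sup_eq]


theorem actSub_mono (P : ι → V →ₗ[ℂ] B) {S T : Submodule ℂ (D → V)} (h : S ≤ T) :
    actSub D P S ≤ actSub D P T :=
  iSup_mono fun _ => Submodule.map_mono h


theorem finrank_range_compLeft (W : Submodule ℂ V) :
    finrank ℂ (LinearMap.range (W.subtype.compLeft D)) = Fintype.card D * finrank ℂ W := by
  rw [LinearMap.finrank_range_of_inj, finrank_pi_fintype]
  · simp
  · intro f g h
    funext z
    exact Subtype.ext (congrFun h z)

/-- Tensor stability of the slope condition. -/
theorem slope_tensor (P : ι → V →ₗ[ℂ] B) (b1 k1 : ℕ)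
    (hmin : ∀ W : Submodule ℂ V, b1 * finrank ℂ W ≤ k1 * finrank ℂ ↥(⨆ i, W.map (P i)))
    (T : Submodule ℂ (D → V)) :
    b1 * finrank ℂ T ≤ k1 * finrank ℂ (actSub D P T) := by
  set n := finrank ℂ (D → V) with hn
  let d : Submodule ℂ (D → V) → ℕ := fun S => finrank ℂ S
  let m : Submodule ℂ (D → V) → ℕ := fun S => finrank ℂ (actSub D P S)
  have hd : ∀ S, d S ≤ n := fun S => Submodule.finrank_le S
  let F : Submodule ℂ (D → V) → ℤ := fun S => (k1 : ℤ) * m S - b1 * d S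
  let ψ : Submodule ℂ (D → V) → ℤ := fun S => (n + 1 : ℤ) * F S - d S
  let ψN : Submodule ℂ (D → V) → ℕ := fun S =>
    (n + 1) * (k1 * m S + b1 * (n - d S)) + (n - d S)
  have hψ : ∀ S, (ψN S : ℤ) = ψ S + ((n + 1) * b1 * n + n) := fun S => by
    simp only [ψN, ψ, F]
    push_cast [Nat.cast_sub (hd S)]
    ring
  obtain ⟨S, hS'⟩ : ∃ S, ∀ T, ψN S ≤ ψN T :=
    ⟨Function.argmin ψN, fun T => Function.argmin_le ψN T⟩
  have hS : ∀ T, ψ S ≤ ψ T := fun T => by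
    have := hS' T
    zify at this
    rw [hψ, hψ] at this
    linarith
  have hinv : ∀ x y, S.map (elemOp V x y) ≤ S := by
    intro x y
    set G := S.map (elemOp V x y) with hG
    have hdG : d G = d S := 
      (Submodule.equivMapOfInjective _ (elemOp_inj x y) S).finrank_eq.symm
    have hmG : m G ≤ m S := by
      have e := actSub_elemOp P S x y
      change finrank ℂ (actSub D P (S.map (elemOp V x y))) ≤ _
      rw [e]
      exact Submodule.finrank_map_le _ _
    have h1 : d (S ⊔ G) + d (S ⊓ G) = d S + d G := Submodule.finrank_sup_add_finrank_inf_eq S G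
    have h2 : m (S ⊔ G) + m (S ⊓ G) ≤ m S + m G := by
      have e := Submodule.finrank_sup_add_finrank_inf_eq (actSub D P S) (actSub D P G)
      have h3 : m (S ⊓ G) ≤ finrank ℂ ↥(actSub D P S ⊓ actSub D P G) :=
        Submodule.finrank_mono (le_inf (actSub_mono P inf_le_left) (actSub_mono P inf_le_right))
      simp only [m] at *
      rw [actSub_sup]
      omega
    have hle : d S ≤ d (S ⊔ G) := Submodule.finrank_mono le_sup_left
    have hU := hS (S ⊔ G)
    have hI := hS (S ⊓ G)
    have hdU := hd (S ⊔ G)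
    have hFF : F (S ⊔ G) + F (S ⊓ G) ≤ 2 * F S := by
      simp only [F]
      zify at h1 h2 hmG hdG
      have : (k1 : ℤ) * (m (S ⊔ G) + m (S ⊓ G)) ≤ k1 * (2 * m S) :=
        mul_le_mul_of_nonneg_left (by linarith) (by positivity)
      have h5 : (b1 : ℤ) * (d (S ⊔ G) + d (S ⊓ G)) = b1 * (2 * d S) := by
        rw [h1, hdG]; ring
      linarith
    have hdd : d (S ⊔ G) ≤ d S := by
      simp only [ψ] at hU hI
      zify at h1 hdG hle hdU ⊢
      have hn0 : (0 : ℤ) ≤ n := by positivity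
      have hFF' := mul_le_mul_of_nonneg_left hFF (by linarith : (0 : ℤ) ≤ n + 1)
      have hd0 : (0 : ℤ) ≤ d S := by positivity
      have key : (n + 1 : ℤ) * (F (S ⊔ G) - F S) = d (S ⊔ G) - d S := by
        apply le_antisymm <;> linarith
      by_contra hc
      have he : 0 < F (S ⊔ G) - F S := by
        by_contra h0
        have := mul_nonneg (by linarith : (0 : ℤ) ≤ n + 1) (by linarith : 0 ≤ -(F (S ⊔ G) - F S))
        linarith
      have := mul_le_mul_of_nonneg_left (by linarith : 1 ≤ F (S ⊔ G) - F S)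
        (by linarith : (0 : ℤ) ≤ n + 1)
      linarith
    have := Submodule.eq_of_le_of_finrank_le (le_sup_left : S ≤ S ⊔ G) hdd
    rw [this]
    exact le_sup_right
  have hsingle : ∀ s ∈ S, ∀ x y, Pi.single x (s y) ∈ S := by
    intro s hs x y
    have h1 := hinv x y (Submodule.mem_map_of_mem hs)
    have h2 := S.sub_mem h1 hs
    simpa [elemOp] using h2
  -- the span of all coordinates
  let W : Submodule ℂ V := ⨆ y, S.map (LinearMap.proj y)
  have hW : ∀ v ∈ W, ∀ x, Pi.single x v ∈ S := by
    intro v hv x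
    have : W ≤ S.comap (LinearMap.single ℂ (fun _ : D => V) x) := by
      refine iSup_le fun y => ?_
      rintro _ ⟨s, hs, rfl⟩
      exact hsingle s hs x y
    exact this hv
  have hSle : S ≤ LinearMap.range (W.subtype.compLeft D) := by
    intro s hs
    have hm : ∀ y, s y ∈ W := fun y =>
      (le_iSup (fun y => S.map (LinearMap.proj y)) y) (Submodule.mem_map_of_mem (f := LinearMap.proj y) hs)
    exact ⟨fun y => ⟨s y, hm y⟩, by ext y; rfl⟩
  have hact : LinearMap.range ((⨆ i, W.map (P i)).subtype.compLeft D) ≤ actSub D P S := by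
    rintro _ ⟨f, rfl⟩
    have hx : ∀ x, ∀ u ∈ (⨆ i, W.map (P i)), Pi.single x u ∈ actSub D P S := by
      intro x u hu
      have : (⨆ i, W.map (P i)) ≤ (actSub D P S).comap (LinearMap.single ℂ (fun _ : D => B) x) := by
        refine iSup_le fun i => ?_
        rintro _ ⟨v, hv, rfl⟩
        refine (le_iSup (fun i => S.map ((P i).compLeft D)) i) ⟨Pi.single x v, hW v hv x, ?_⟩
        funext w
        by_cases h : w = x
        · subst h; simp
        · simp [Pi.single_eq_of_ne h]
      exact this hu
    have : (((⨆ i, W.map (P i)).subtype.compLeft D) f) = ∑ x, Pi.single x (f x : B) := by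
      funext w
      simp [Finset.sum_apply, Pi.single_apply]
    rw [this]
    exact Submodule.sum_mem _ fun x _ => hx x _ (f x).2
  have hFS : 0 ≤ F S := by
    have h1 : d S ≤ Fintype.card D * finrank ℂ W := by
      rw [← finrank_range_compLeft]; exact Submodule.finrank_mono hSle
    have h2 : Fintype.card D * finrank ℂ ↥(⨆ i, W.map (P i)) ≤ m S := by
      rw [← finrank_range_compLeft]; exact Submodule.finrank_mono hact
    have h3 : b1 * d S ≤ k1 * m S :=
      calc b1 * d S ≤ b1 * (Fintype.card D * finrank ℂ W) := Nat.mul_le_mul_left _ h1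
        _ = Fintype.card D * (b1 * finrank ℂ W) := by ring
        _ ≤ Fintype.card D * (k1 * finrank ℂ ↥(⨆ i, W.map (P i))) := Nat.mul_le_mul_left _ (hmin W)
        _ = k1 * (Fintype.card D * finrank ℂ ↥(⨆ i, W.map (P i))) := by ring
        _ ≤ k1 * m S := Nat.mul_le_mul_left _ h2
    simp only [F]
    zify at h3
    linarith
  have hT := hS T
  have hFT : 0 ≤ F T := by
    by_contra hc
    simp only [ψ] at hT
    have h1 := hd S
    zify at h1
    have h2 : (0 : ℤ) ≤ d T := by positivity
    have hn0 : (0 : ℤ) ≤ n := by positivity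
    have h3 := mul_nonneg (by linarith : (0 : ℤ) ≤ n + 1) hFS
    have h4 := mul_le_mul_of_nonneg_left (by linarith : F T ≤ -1) (by linarith : (0 : ℤ) ≤ n + 1)
    linarith
  simp only [F, m, d] at hFT
  zify
  linarith

/-- The span of the maps `P i ∘ ev_y` restricted to `S`. -/
def evSub (D : Type) (P : ι → V →ₗ[ℂ] B) (S : Submodule ℂ (D → V)) : Submodule ℂ (S →ₗ[ℂ] B) :=
  Submodule.span ℂ (Set.range fun p : ι × D =>
    (P p.1) ∘ₗ (LinearMap.proj (R := ℂ) (φ := fun _ : D => V) p.2) ∘ₗ S.subtype)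

/-- A nonzero subspace of minimal slope. -/
theorem exists_min_slope (P : ι → V →ₗ[ℂ] B) (hV : 0 < finrank ℂ V) :
    ∃ V1 : Submodule ℂ V, 0 < finrank ℂ V1 ∧ ∀ W : Submodule ℂ V,
      finrank ℂ ↥(⨆ i, V1.map (P i)) * finrank ℂ W
        ≤ finrank ℂ V1 * finrank ℂ ↥(⨆ i, W.map (P i)) := by
  let N := (finrank ℂ V).factorial
  let f : Submodule ℂ V → ℕ := fun W => finrank ℂ ↥(⨆ i, W.map (P i)) * (N / finrank ℂ W)
  let s : Set (Submodule ℂ V) := {W | 0 < finrank ℂ W}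
  have hs : s.Nonempty := ⟨⊤, by simpa [s] using hV⟩
  have hf : ∀ W ∈ s, f W * finrank ℂ W = N * finrank ℂ ↥(⨆ i, W.map (P i)) := by
    intro W hW
    have : N / finrank ℂ W * finrank ℂ W = N :=
      Nat.div_mul_cancel (Nat.dvd_factorial hW (Submodule.finrank_le W))
    simp only [f]
    rw [mul_assoc, this, mul_comm]
  refine ⟨Function.argminOn f s hs, Function.argminOn_mem f s hs, fun W => ?_⟩
  set V1 := Function.argminOn f s hs
  have hV1 : V1 ∈ s := Function.argminOn_mem f s hs
  rcases Nat.eq_zero_or_pos (finrank ℂ W) with h0 | h0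
  · simp [h0]
  · have hle : f V1 ≤ f W := Function.argminOn_le f s h0
    have hN : 0 < N := Nat.factorial_pos _
    refine Nat.le_of_mul_le_mul_left ?_ hN
    calc N * (finrank ℂ ↥(⨆ i, V1.map (P i)) * finrank ℂ W)
        = f V1 * finrank ℂ V1 * finrank ℂ W := by rw [hf V1 hV1]; ring
      _ ≤ f W * finrank ℂ V1 * finrank ℂ W := by gcongr
      _ = (f W * finrank ℂ W) * finrank ℂ V1 := by ring
      _ = N * (finrank ℂ V1 * finrank ℂ ↥(⨆ i, W.map (P i))) := by rw [hf W h0]; ring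

end Helpers

theorem evSub_le {ι D : Type} [Fintype D] (n : ℕ) :
    ∀ (V B : Type) [AddCommGroup V] [Module ℂ V] [FiniteDimensional ℂ V]
      [AddCommGroup B] [Module ℂ B] [FiniteDimensional ℂ B]
      (P : ι → V →ₗ[ℂ] B) (S : Submodule ℂ (D → V)), finrank ℂ V = n →
      finrank ℂ (evSub D P S) ≤ n * finrank ℂ (actSub D P S) := by
  classical
  induction n using Nat.strong_induction_on with
  | _ n ih =>
  intro V B _ _ _ _ _ _ P S hn
  rcases Nat.eq_zero_or_pos n with h0 | hpos
  · have hsub : Subsingleton V := finrank_zero_iff.mp (hn.trans h0)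
    have : evSub D P S = ⊥ := by
      rw [evSub, Submodule.span_eq_bot]
      rintro _ ⟨p, rfl⟩
      ext s
      simp [Subsingleton.elim ((s : D → V) p.2) 0]
    rw [this]
    simp
  · obtain ⟨V1, hV1, hmin⟩ := exists_min_slope P (hn ▸ hpos)
    set B1 : Submodule ℂ B := ⨆ i, V1.map (P i) with hB1
    have hst := slope_tensor P _ _ hmin S
    have hP : ∀ i, V1 ≤ B1.comap (P i) := fun i =>
      Submodule.map_le_iff_le_comap.mp (le_iSup (fun i => V1.map (P i)) i)
    let P' : ι → (V ⧸ V1) →ₗ[ℂ] (B ⧸ B1) := fun i => V1.mapQ B1 (P i) (hP i)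
    let S' : Submodule ℂ (D → V ⧸ V1) := S.map (V1.mkQ.compLeft D)
    have hq : finrank ℂ (V ⧸ V1) + finrank ℂ V1 = n := by
      rw [← hn]; exact V1.finrank_quotient_add_finrank
    have IH := ih (finrank ℂ (V ⧸ V1)) (by omega) (V ⧸ V1) (B ⧸ B1) P' S' rfl
    have hact : finrank ℂ (actSub D P' S') ≤ finrank ℂ (actSub D P S) := by
      have : actSub D P' S' = (actSub D P S).map (B1.mkQ.compLeft D) := by
        unfold actSub
        rw [Submodule.map_iSup]
        congr 1
        funext i
        simp only [S']
        rw [← Submodule.map_comp, ← Submodule.map_comp]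
        rfl
      rw [this]
      exact Submodule.finrank_map_le _ _
    let l : (S →ₗ[ℂ] B) →ₗ[ℂ] (S →ₗ[ℂ] B ⧸ B1) := LinearMap.compRight ℂ B1.mkQ
    let pre : (S' →ₗ[ℂ] B ⧸ B1) →ₗ[ℂ] (S →ₗ[ℂ] B ⧸ B1) :=
      LinearMap.lcomp ℂ (B ⧸ B1) ((V1.mkQ.compLeft D).submoduleMap S)
    have himg : (evSub D P S).map l ≤ (evSub D P' S').map pre := by
      rw [evSub, Submodule.map_span, Submodule.span_le]
      rintro _ ⟨_, ⟨p, rfl⟩, rfl⟩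
      refine ⟨_, Submodule.subset_span ⟨p, rfl⟩, ?_⟩
      ext s
      rfl
    have himg' : finrank ℂ ((evSub D P S).map l) ≤ finrank ℂ (evSub D P' S') :=
      (Submodule.finrank_mono himg).trans (Submodule.finrank_map_le _ _)
    have hker : finrank ℂ (LinearMap.ker l) ≤ finrank ℂ S * finrank ℂ B1 := by
      have h1 : LinearMap.ker l ≤
          LinearMap.range (LinearMap.compRight ℂ B1.subtype : (S →ₗ[ℂ] B1) →ₗ[ℂ] (S →ₗ[ℂ] B)) := by
        intro g hg
        have hg' : ∀ s, g s ∈ B1 := fun s => by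
          have := LinearMap.congr_fun (LinearMap.mem_ker.mp hg) s
          simpa [l] using this
        exact ⟨g.codRestrict B1 hg', by ext s; rfl⟩
      calc _ ≤ _ := Submodule.finrank_mono h1
        _ ≤ finrank ℂ (S →ₗ[ℂ] B1) := LinearMap.finrank_range_le _
        _ = _ := finrank_linearMap ..
    have hsum : finrank ℂ (evSub D P S) ≤ finrank ℂ ((evSub D P S).map l)
        + finrank ℂ (LinearMap.ker l) := by
      have h1 := LinearMap.finrank_range_add_finrank_ker (l.domRestrict (evSub D P S))
      rw [LinearMap.range_domRestrict] at h1
      have h2 : finrank ℂ (LinearMap.ker (l.domRestrict (evSub D P S)))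
          ≤ finrank ℂ (LinearMap.ker l) := by
        rw [← (Submodule.equivMapOfInjective _ (evSub D P S).injective_subtype
          (LinearMap.ker (l.domRestrict (evSub D P S)))).finrank_eq.symm]
        refine Submodule.finrank_mono ?_
        rintro _ ⟨x, hx, rfl⟩
        exact hx
      omega
    calc finrank ℂ (evSub D P S)
        ≤ finrank ℂ (V ⧸ V1) * finrank ℂ (actSub D P S) + finrank ℂ S * finrank ℂ B1 := by
          have := Nat.mul_le_mul_left (finrank ℂ (V ⧸ V1)) hact
          omega
      _ ≤ finrank ℂ (V ⧸ V1) * finrank ℂ (actSub D P S)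
          + finrank ℂ V1 * finrank ℂ (actSub D P S) := by
          have : finrank ℂ S * finrank ℂ B1 = finrank ℂ B1 * finrank ℂ S := mul_comm _ _
          omega
      _ = n * finrank ℂ (actSub D P S) := by rw [← add_mul, hq]

theorem rank_ineq (a b c : ℕ) (ρ : Matrix (Fin a × Fin b × Fin c) (Fin a × Fin b × Fin c) ℂ)
    (hρ : ρ.PosSemidef) : (rhoBC ρ).rank ≤ (rhoAB ρ).rank * (rhoAC ρ).rank := by
  obtain ⟨m, v, rfl⟩ := Matrix.posSemidef_iff_eq_sum_vecMulVec.mp hρ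
  set ρ := ∑ i, vecMulVec (v i) (star (v i)) with hρdef
  let MAB : Matrix (Fin a × Fin b) (Fin c × Fin m) ℂ := Matrix.of fun p q => v q.2 (p.1, p.2, q.1)
  let MAC : Matrix (Fin a × Fin c) (Fin b × Fin m) ℂ := Matrix.of fun p q => v q.2 (p.1, q.1, p.2)
  let MBC : Matrix (Fin b × Fin c) (Fin a × Fin m) ℂ := Matrix.of fun p q => v q.2 (q.1, p.1, p.2)
  have hAB : rhoAB ρ = MAB * MABᴴ := by
    ext p q
    simp [rhoAB, MAB, hρdef, Matrix.mul_apply, Matrix.sum_apply, vecMulVec_apply,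
      Fintype.sum_prod_type]
  have hAC : rhoAC ρ = MAC * MACᴴ := by
    ext p q
    simp [rhoAC, MAC, hρdef, Matrix.mul_apply, Matrix.sum_apply, vecMulVec_apply,
      Fintype.sum_prod_type]
  have hBC : rhoBC ρ = MBC * MBCᴴ := by
    ext p q
    simp [rhoBC, MBC, hρdef, Matrix.mul_apply, Matrix.sum_apply, vecMulVec_apply,
      Fintype.sum_prod_type]
  rw [hAB, hAC, hBC, Matrix.rank_self_mul_conjTranspose, Matrix.rank_self_mul_conjTranspose,
    Matrix.rank_self_mul_conjTranspose]
  let V : Submodule ℂ (Fin a × Fin b → ℂ) := Submodule.span ℂ (Set.range MAB.col)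
  let q : Fin c → Fin m → V := fun k x => ⟨MAB.col (k, x), Submodule.subset_span ⟨(k, x), rfl⟩⟩
  let P : Fin a → V →ₗ[ℂ] (Fin b → ℂ) := fun i =>
    (LinearMap.funLeft ℂ ℂ (fun j : Fin b => (i, j))) ∘ₗ V.subtype
  let S : Submodule ℂ (Fin m → V) := Submodule.span ℂ (Set.range q)
  have hq : ∀ k, q k ∈ S := fun k => Submodule.subset_span ⟨k, rfl⟩
  have key := evSub_le (ι := Fin a) (D := Fin m) _ V (Fin b → ℂ) P S rfl
  have hV : finrank ℂ V = MAB.rank := (Matrix.rank_eq_finrank_span_cols MAB).symm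
  rw [hV] at key
  have h1 : finrank ℂ (actSub (Fin m) P S) ≤ MAC.rank := by
    rw [Matrix.rank_eq_finrank_span_row]
    let φ : (Fin b × Fin m → ℂ) →ₗ[ℂ] (Fin m → Fin b → ℂ) :=
      LinearMap.pi fun x => LinearMap.pi fun j => LinearMap.proj (j, x)
    have : actSub (Fin m) P S ≤ (Submodule.span ℂ (Set.range MAC.row)).map φ := by
      refine iSup_le fun i => ?_
      simp only [S]
      rw [Submodule.map_span, Submodule.span_le]
      rintro _ ⟨_, ⟨k, rfl⟩, rfl⟩
      exact ⟨MAC.row (i, k), Submodule.subset_span ⟨(i, k), rfl⟩, rfl⟩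
    exact (Submodule.finrank_mono this).trans (Submodule.finrank_map_le _ _)
  have h2 : MBC.rank ≤ finrank ℂ (evSub (Fin m) P S) := by
    rw [Matrix.rank_eq_finrank_span_cols]
    let φ : (S →ₗ[ℂ] (Fin b → ℂ)) →ₗ[ℂ] (Fin b × Fin c → ℂ) :=
      LinearMap.pi fun p => LinearMap.proj p.1 ∘ₗ LinearMap.applyₗ (⟨q p.2, hq p.2⟩ : S)
    have : Submodule.span ℂ (Set.range MBC.col) ≤ (evSub (Fin m) P S).map φ := by
      rw [Submodule.span_le]
      rintro _ ⟨p, rfl⟩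
      exact ⟨_, Submodule.subset_span ⟨p, rfl⟩, rfl⟩
    exact (Submodule.finrank_mono this).trans (Submodule.finrank_map_le _ _)
  exact h2.trans (key.trans (Nat.mul_le_mul_left _ h1))

theorem stmt6 (a b c : ℕ) (ρ : Matrix (Fin a × Fin b × Fin c) (Fin a × Fin b × Fin c) ℂ)
    (hρ : ρ.PosSemidef) (hAB : (rhoAB ρ).rank ≤ 3)
    (hmax : (rhoAB ρ).rank * (rhoAC ρ).rank ≤ max b c) :
    (rhoBC ρ).rank ≤ max b c := by
  exact (rank_ineq a b c ρ hρ).trans hmax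
end

section
/- Let (M_{ij}), for i ∈ Fin m₁ and j ∈ Fin n₁, be an array of m₂×n₂ complex matrices whose linear span has dimension s (so the associated bipartite matrix M has Schmidt rank s), where s ≤ n₁. Suppose there exists a row index i₀ such that s of the blocks M_{i₀,1}, …, M_{i₀,n₁} are linearly independent. Then rank(M) ≤ s · rank(M^Γ). -/
open Matrix

/-- The bipartite matrix associated to an `m₁ × n₁` array of `m₂ × n₂` blocks. -/
def bipMatrix {m₁ n₁ m₂ n₂ : ℕ} (M : Fin m₁ → Fin n₁ → Matrix (Fin m₂) (Fin n₂) ℂ) :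
    Matrix (Fin m₁ × Fin m₂) (Fin n₁ × Fin n₂) ℂ :=
  Matrix.of fun p q => M p.1 q.1 p.2 q.2

/-- The partial transpose of the bipartite matrix: each block is replaced by its transpose. -/
def bipMatrixPT {m₁ n₁ m₂ n₂ : ℕ} (M : Fin m₁ → Fin n₁ → Matrix (Fin m₂) (Fin n₂) ℂ) :
    Matrix (Fin m₁ × Fin n₂) (Fin n₁ × Fin m₂) ℂ :=
  Matrix.of fun p q => M p.1 q.1 q.2 p.2

namespace StmtAux

open scoped ComplexOrder

/-- Orthogonal projection onto the column space. -/
lemma exists_rangeProj {X Y : Type*} [Fintype X] [Fintype Y] [DecidableEq X]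
    (F : Matrix X Y ℂ) : ∃ R : Matrix X X ℂ, Rᴴ = R ∧ R * R = R ∧ R * F = F ∧
      (∃ S : Matrix Y X ℂ, R = F * S) ∧ R.trace = (F.rank : ℂ) := by
  classical
  have hA : (F * Fᴴ).IsHermitian := isHermitian_mul_conjTranspose_self F
  set U : Matrix X X ℂ := (hA.eigenvectorUnitary : Matrix X X ℂ) with hU
  have hUU : star U * U = 1 := Unitary.coe_star_mul_self _
  have hUU' : U * star U = 1 := Unitary.coe_mul_star_self _
  set l : X → ℂ := fun i => (hA.eigenvalues i : ℂ) with hl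
  have hspec : F * Fᴴ = U * diagonal l * star U := by
    have := hA.spectral_theorem
    rw [Unitary.conjStarAlgAut_apply] at this
    exact this
  set e : X → ℂ := fun i => if l i = 0 then 0 else 1 with he
  set R : Matrix X X ℂ := U * diagonal e * star U with hR
  have hherm : Rᴴ = R := by
    rw [hR, conjTranspose_mul, conjTranspose_mul, star_eq_conjTranspose,
      conjTranspose_conjTranspose, diagonal_conjTranspose, Matrix.mul_assoc]
    congr 3
    funext i
    simp only [he, Pi.star_apply]
    split_ifs <;> simp
  have hmul : ∀ f g : X → ℂ, (U * diagonal f * star U) * (U * diagonal g * star U)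
      = U * diagonal (fun i => f i * g i) * star U := by
    intro f g
    calc _ = U * diagonal f * (star U * U) * diagonal g * star U := by
          simp only [Matrix.mul_assoc]
      _ = _ := by rw [hUU, Matrix.mul_one, Matrix.mul_assoc U, diagonal_mul_diagonal]
  have hid : R * R = R := by
    rw [hR, hmul]
    congr 3
    funext i
    simp [he]
  have hRH : R * (F * Fᴴ) = F * Fᴴ := by
    rw [hspec, hR, hmul]
    congr 3
    funext i
    by_cases h : l i = 0 <;> simp [he, h]
  have hRF : R * F = F := by
    have h0 : (R * F - F) * (R * F - F)ᴴ = 0 := by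
      have : (R * F - F) = (R - 1) * F := by rw [Matrix.sub_mul, Matrix.one_mul]
      rw [this, conjTranspose_mul, ← Matrix.mul_assoc, Matrix.mul_assoc _ F, Matrix.sub_mul,
        hRH, Matrix.one_mul, sub_self, Matrix.zero_mul]
    have := Matrix.self_mul_conjTranspose_eq_zero.mp h0
    exact sub_eq_zero.mp this
  refine ⟨R, hherm, hid, hRF, ⟨Fᴴ * (U * diagonal (fun i => (l i)⁻¹) * star U), ?_⟩, ?_⟩
  · rw [← Matrix.mul_assoc, hspec, hmul, hR]
    congr 3
    funext i
    by_cases h : l i = 0 <;> simp [he, h]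
  · rw [hR, trace_mul_comm, ← Matrix.mul_assoc, hUU, Matrix.one_mul, trace_diagonal,
      ← rank_self_mul_conjTranspose F, hA.rank_eq_card_non_zero_eigs, Fintype.card_subtype]
    simp only [he, hl]
    rw [Finset.sum_ite]
    simp

lemma rangeProj_unique {X Y : Type*} [Fintype X] [Fintype Y]
    (F : Matrix X Y ℂ) (R R' : Matrix X X ℂ) (S S' : Matrix Y X ℂ)
    (h1 : Rᴴ = R) (h2 : R * F = F) (h3 : R = F * S)
    (h1' : R'ᴴ = R') (h2' : R' * F = F) (h3' : R' = F * S') : R = R' := by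
  have a : R * R' = R' := by
    conv_lhs => rw [h3', ← Matrix.mul_assoc, h2, ← h3']
  have b : R' * R = R := by
    conv_lhs => rw [h3, ← Matrix.mul_assoc, h2', ← h3]
  calc R = Rᴴ := h1.symm
    _ = (R' * R)ᴴ := by rw [b]
    _ = R * R' := by rw [conjTranspose_mul, h1, h1']
    _ = R' := a

/-- Trace of a projection is its rank. -/
lemma trace_proj {X : Type*} [Fintype X] [DecidableEq X] (P : Matrix X X ℂ)
    (h1 : Pᴴ = P) (h2 : P * P = P) : P.trace = (P.rank : ℂ) := by
  obtain ⟨R, hR1, hR2, hR3, ⟨S, hS⟩, hR5⟩ := exists_rangeProj P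
  have := rangeProj_unique P R P S 1 hR1 hR3 hS h1 h2 (by rw [Matrix.mul_one])
  rw [← hR5, this]

/-- Invariance under a family of index permutations. -/
def SInv {G X : Type*} (e : G → Equiv.Perm X) (H : Matrix X X ℂ) : Prop :=
  ∀ g, H.submatrix (e g) (e g) = H

structure SProj {G X : Type*} [Fintype X] (e : G → Equiv.Perm X) (P : Matrix X X ℂ) : Prop where
  herm : Pᴴ = P
  idem : P * P = P
  inv : SInv e P

structure SMin {G X : Type*} [Fintype X] (e : G → Equiv.Perm X) (P : Matrix X X ℂ) : Prop
    extends SProj e P where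
  ne : P ≠ 0
  min : ∀ R : Matrix X X ℂ, SProj e R → P * R = R → R = 0 ∨ R = P

/-- The range projection of an invariant matrix is invariant. -/
lemma rangeProj_inv {G X Y : Type*} [Fintype X] [Fintype Y]
    (e : G → Equiv.Perm X) (e' : G → Equiv.Perm Y)
    (F : Matrix X Y ℂ) (hF : ∀ g, F.submatrix (e g) (e' g) = F)
    (R : Matrix X X ℂ) (S : Matrix Y X ℂ)
    (h1 : Rᴴ = R) (h2 : R * F = F) (h3 : R = F * S) : SInv e R := by
  intro g
  refine rangeProj_unique F _ R (S.submatrix (e' g) (e g)) S ?_ ?_ ?_ h1 h2 h3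
  · rw [conjTranspose_submatrix, h1]
  · conv_lhs => rw [← hF g]
    rw [submatrix_mul_equiv, h2, hF]
  · conv_rhs => rw [← hF g]
    rw [submatrix_mul_equiv, ← h3]

lemma SMin.scalar {G X : Type*} [Fintype X] [DecidableEq X] {e : G → Equiv.Perm X}
    {P : Matrix X X ℂ}
    (hP : SMin e P) (H : Matrix X X ℂ) (h1 : Hᴴ = H) (h2 : SInv e H) (h3 : P * H = H) :
    ∃ c : ℂ, H = c • P := by
  classical
  by_cases hH : H = 0
  · exact ⟨0, by rw [hH, zero_smul]⟩
  have hA : H.IsHermitian := h1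
  have : ∃ i, hA.eigenvalues i ≠ 0 := by
    by_contra hcon
    push Not at hcon
    apply hH
    rw [← hA.eigenvalues_eq_zero_iff]
    funext i
    exact hcon i
  obtain ⟨i, hi⟩ := this
  set c : ℂ := (hA.eigenvalues i : ℂ) with hc
  have hc0 : c ≠ 0 := by simpa [hc] using hi
  set v : X → ℂ := ⇑(hA.eigenvectorBasis i) with hv
  have hHv : H *ᵥ v = c • v := by
    have := hA.mulVec_eigenvectorBasis i
    rw [this]
    ext j
    simp [hc, hv]
  have hv0 : v ≠ 0 := by
    intro h0
    have := hA.eigenvectorBasis.orthonormal.ne_zero i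
    apply this
    ext j
    exact congrFun h0 j
  have hPv : P *ᵥ v = v := by
    have h5 : P *ᵥ (H *ᵥ v) = H *ᵥ v := by rw [mulVec_mulVec, h3]
    rw [hHv, mulVec_smul] at h5
    exact smul_right_injective _ hc0 h5
  refine ⟨c, ?_⟩
  obtain ⟨R, hR1, hR2, hR3, ⟨S, hS⟩, -⟩ := exists_rangeProj (H - c • P)
  have hcstar : star c = c := by simp [hc]
  have hKh : (H - c • P)ᴴ = H - c • P := by
    rw [conjTranspose_sub, conjTranspose_smul, h1, hP.herm, hcstar]
  have hKi : SInv e (H - c • P) := by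
    intro g
    rw [submatrix_sub, submatrix_smul]
    simp [h2 g, hP.inv g]
  have hRi := rangeProj_inv e e _ hKi R S hR1 hR3 hS
  have hPR : P * R = R := by
    rw [hS, ← Matrix.mul_assoc, Matrix.mul_sub, h3, Matrix.mul_smul, hP.idem]
  rcases hP.min R ⟨hR1, hR2, hRi⟩ hPR with h | h
  · rw [h, Matrix.zero_mul] at hR3
    exact (sub_eq_zero.mp hR3.symm)
  · exfalso
    apply hv0
    rw [← hPv, ← h, ← hR1, hS, conjTranspose_mul, hKh, ← mulVec_mulVec, sub_mulVec, hHv,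
      smul_mulVec, hPv, sub_self, mulVec_zero]

lemma SProj.decomp {G X : Type} [Fintype X] [DecidableEq X] {e : G → Equiv.Perm X}
    (k : ℕ) : ∀ P : Matrix X X ℂ, SProj e P → P.rank ≤ k →
    ∃ (ι : Type) (_ : Fintype ι) (F : ι → Matrix X X ℂ), (∀ i, SMin e (F i)) ∧
      (∀ i j, i ≠ j → F i * F j = 0) ∧ ∑ i, F i = P := by
  classical
  induction k with
  | zero =>
    intro P hP hk
    refine ⟨Empty, inferInstance, fun x => x.elim, fun x => x.elim, fun x => x.elim, ?_⟩
    have h0 : P.rank = 0 := by omega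
    have : P = 0 := by
      have ht := trace_proj P hP.herm hP.idem
      rw [h0] at ht
      rw [← Matrix.trace_conjTranspose_mul_self_eq_zero_iff, hP.herm, hP.idem]
      simpa using ht
    simp [this]
  | succ k ih =>
    intro P hP hk
    by_cases hP0 : P = 0
    · refine ⟨Empty, inferInstance, fun x => x.elim, fun x => x.elim, fun x => x.elim, ?_⟩
      simp [hP0]
    by_cases hmin : SMin e P
    · refine ⟨Unit, inferInstance, fun _ => P, fun _ => hmin, ?_, by simp⟩
      intro i j hij
      exact absurd (Subsingleton.elim i j) hij
    have : ∃ R : Matrix X X ℂ, SProj e R ∧ P * R = R ∧ R ≠ 0 ∧ R ≠ P := by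
      by_contra hcon
      push Not at hcon
      exact hmin ⟨hP, hP0, fun R hR h => or_iff_not_imp_left.mpr (hcon R hR h)⟩
    obtain ⟨R, hR, hPR, hR0, hRP⟩ := this
    have hRP' : R * P = R := by
      have := congrArg conjTranspose hPR
      rwa [conjTranspose_mul, hR.herm, hP.herm] at this
    set R' := P - R with hR'def
    have hR' : SProj e R' := by
      refine ⟨?_, ?_, ?_⟩
      · rw [conjTranspose_sub, hP.herm, hR.herm]
      · rw [hR'def, Matrix.mul_sub, Matrix.sub_mul, Matrix.sub_mul, hP.idem, hPR, hRP', hR.idem]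
        simp
      · intro g
        rw [hR'def, submatrix_sub]
        simp [hP.inv g, hR.inv g]
    have hRR' : R * R' = 0 := by rw [hR'def, Matrix.mul_sub, hRP', hR.idem, sub_self]
    have hR'R : R' * R = 0 := by rw [hR'def, Matrix.sub_mul, hPR, hR.idem, sub_self]
    have hpos : ∀ T : Matrix X X ℂ, SProj e T → T ≠ 0 → T.rank ≠ 0 := by
      intro T hT hT0 h0
      apply hT0
      have ht := trace_proj T hT.herm hT.idem
      rw [h0] at ht
      rw [← Matrix.trace_conjTranspose_mul_self_eq_zero_iff, hT.herm, hT.idem]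
      simpa using ht
    have hsum : R.rank + R'.rank = P.rank := by
      have : ((R.rank + R'.rank : ℕ) : ℂ) = (P.rank : ℂ) := by
        push_cast
        rw [← trace_proj P hP.herm hP.idem, ← trace_proj R hR.herm hR.idem,
          ← trace_proj R' hR'.herm hR'.idem, ← trace_add, hR'def, add_sub_cancel]
      exact_mod_cast this
    have a1 := hpos R hR hR0
    have a2 := hpos R' hR' (fun h => hRP (sub_eq_zero.mp h).symm)
    obtain ⟨ι, _, F, hF1, hF2, hF3⟩ := ih R hR (by omega)
    obtain ⟨κ, _, F', hF1', hF2', hF3'⟩ := ih R' hR' (by omega)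
    have b1 : ∀ i, F i * R = F i := by
      intro i
      rw [← hF3, Finset.mul_sum, Finset.sum_eq_single i]
      · exact (hF1 i).idem
      · intro j _ hj
        exact hF2 i j hj.symm
      · simp
    have b2 : ∀ i, R * F i = F i := by
      intro i
      rw [← hF3, Finset.sum_mul, Finset.sum_eq_single i]
      · exact (hF1 i).idem
      · intro j _ hj
        exact hF2 j i hj
      · simp
    have b1' : ∀ i, F' i * R' = F' i := by
      intro i
      rw [← hF3', Finset.mul_sum, Finset.sum_eq_single i]
      · exact (hF1' i).idem
      · intro j _ hj
        exact hF2' i j hj.symm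
      · simp
    have b2' : ∀ i, R' * F' i = F' i := by
      intro i
      rw [← hF3', Finset.sum_mul, Finset.sum_eq_single i]
      · exact (hF1' i).idem
      · intro j _ hj
        exact hF2' j i hj
      · simp
    refine ⟨ι ⊕ κ, inferInstance, Sum.elim F F', ?_, ?_, ?_⟩
    · rintro (i | i)
      · exact hF1 i
      · exact hF1' i
    · rintro (i | i) (j | j) hij
      · exact hF2 i j (fun h => hij (by rw [h]))
      · show F i * F' j = 0
        rw [← b1 i, ← b2' j, Matrix.mul_assoc, ← Matrix.mul_assoc R, hRR', Matrix.zero_mul,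
          Matrix.mul_zero]
      · show F' i * F j = 0
        rw [← b1' i, ← b2 j, Matrix.mul_assoc, ← Matrix.mul_assoc R', hR'R, Matrix.zero_mul,
          Matrix.mul_zero]
      · exact hF2' i j (fun h => hij (by rw [h]))
    · rw [Fintype.sum_sum_type]
      simp only [Sum.elim_inl, Sum.elim_inr]
      rw [hF3, hF3', hR'def, add_sub_cancel]


lemma sum_normSq_mat {X Y : Type*} [Fintype X] [Fintype Y] (Z : Matrix X Y ℂ) :
    ((∑ x, ∑ y, ‖Z x y‖ ^ 2 : ℝ) : ℂ) = (Z * Zᴴ).trace := by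
  simp only [trace, diag_apply, mul_apply, conjTranspose_apply]
  push_cast
  refine Finset.sum_congr rfl fun x _ => Finset.sum_congr rfl fun y _ => ?_
  exact (RCLike.mul_conj (Z x y)).symm

lemma sum4_pos {A B C D : Type} [Fintype A] [Fintype B] [Fintype C] [Fintype D]
    (ψ : A → B → C → D → ℂ) (hne : ∃ a b c d, ψ a b c d ≠ 0) :
    0 < ∑ a, ∑ b, ∑ c, ∑ d, ‖ψ a b c d‖ ^ 2 := by
  obtain ⟨a, b, c, d, h⟩ := hne
  refine Finset.sum_pos' (fun _ _ => by positivity) ⟨a, Finset.mem_univ _, ?_⟩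
  refine Finset.sum_pos' (fun _ _ => by positivity) ⟨b, Finset.mem_univ _, ?_⟩
  refine Finset.sum_pos' (fun _ _ => by positivity) ⟨c, Finset.mem_univ _, ?_⟩
  refine Finset.sum_pos' (fun _ _ => by positivity) ⟨d, Finset.mem_univ _, ?_⟩
  positivity

lemma core_cs {A B C D : Type} [Fintype A] [Fintype B] [Fintype C] [Fintype D]
    (ψ : A → B → C → D → ℂ)
    (R : Matrix (B × D) (B × D) ℂ) (R' : Matrix (B × C) (B × C) ℂ)
    (P : Matrix A A ℂ) (Q : Matrix B B ℂ) (α t t' : ℂ) (p q x y : ℕ)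
    (hR1 : Rᴴ = R) (hR2 : R * R = R)
    (hR3 : ∀ a b c d, ∑ u : B × D, R (b, d) u * ψ a u.1 c u.2 = ψ a b c d)
    (hR1' : R'ᴴ = R') (hR2' : R' * R' = R')
    (hR3' : ∀ a b c d, ∑ u : B × C, R' (b, c) u * ψ a u.1 u.2 d = ψ a b c d)
    (hx : R.trace = x) (hy : R'.trace = y)
    (hP : P * P = P) (hQ : Q * Q = Q) (hp : P.trace = p) (hq : Q.trace = q)
    (hT : ∀ b b', ∑ d, R (b, d) (b', d) = t * Q b b')
    (hT' : ∀ b b', ∑ c, R' (b, c) (b', c) = t' * Q b b')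
    (hρ : ∀ a a', ∑ b, ∑ c, ∑ d, ψ a b c d * star (ψ a' b c d) = α * P a a')
    (hne : ∃ a b c d, ψ a b c d ≠ 0) : p * q ≤ x * y := by
  set n : ℝ := ∑ a, ∑ b, ∑ c, ∑ d, ‖ψ a b c d‖ ^ 2 with hn
  have hnpos : 0 < n := by
    exact sum4_pos ψ hne
  have hnc : (n : ℂ) = ∑ a, ∑ b, ∑ c, ∑ d, ψ a b c d * star (ψ a b c d) := by
    rw [hn]
    push_cast
    refine Finset.sum_congr rfl fun a _ => Finset.sum_congr rfl fun b _ =>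
      Finset.sum_congr rfl fun c _ => Finset.sum_congr rfl fun d _ => ?_
    exact (RCLike.mul_conj _).symm
  have hαp : α * p = n := by
    rw [hnc, ← hp, trace, Finset.mul_sum]
    exact Finset.sum_congr rfl fun a _ => (hρ a a).symm
  have htq : t * q = x := by
    rw [← hx, ← hq, trace, trace, Finset.mul_sum, Fintype.sum_prod_type]
    exact Finset.sum_congr rfl fun b _ => (hT b b).symm
  have htq' : t' * q = y := by
    rw [← hy, ← hq, trace, trace, Finset.mul_sum, Fintype.sum_prod_type]
    exact Finset.sum_congr rfl fun b _ => (hT' b b).symm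
  -- the matrix `Z`
  set V : Matrix B ((B × D) × D) ℂ := of fun b u => R (b, u.2) u.1 with hV
  set V' : Matrix B ((B × C) × C) ℂ := of fun b u => R' (b, u.2) u.1 with hV'
  have hVV : V * Vᴴ = t • Q := by
    ext b b'
    rw [mul_apply, Fintype.sum_prod_type_right, Matrix.smul_apply, smul_eq_mul, ← hT]
    refine Finset.sum_congr rfl fun d _ => ?_
    conv_rhs => rw [← hR2, mul_apply]
    refine Finset.sum_congr rfl fun u _ => ?_
    simp only [hV, of_apply, conjTranspose_apply]
    rw [← conjTranspose_apply R, hR1]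
  have hVV' : V' * V'ᴴ = t' • Q := by
    ext b b'
    rw [mul_apply, Fintype.sum_prod_type_right, Matrix.smul_apply, smul_eq_mul, ← hT']
    refine Finset.sum_congr rfl fun d _ => ?_
    conv_rhs => rw [← hR2', mul_apply]
    refine Finset.sum_congr rfl fun u _ => ?_
    simp only [hV', of_apply, conjTranspose_apply]
    rw [← conjTranspose_apply R', hR1']
  set Z := Vᴴ * V' with hZ
  have hZn : (q : ℂ) * ((∑ u, ∑ w, ‖Z u w‖ ^ 2 : ℝ) : ℂ) = x * y := by
    rw [sum_normSq_mat, hZ, conjTranspose_mul, conjTranspose_conjTranspose, Matrix.mul_assoc,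
      ← Matrix.mul_assoc V', hVV', trace_mul_comm, Matrix.mul_assoc, hVV, Matrix.smul_mul,
      Matrix.mul_smul, hQ, trace_smul, trace_smul, hq, ← htq, ← htq', smul_eq_mul, smul_eq_mul]
    ring
  -- the matrix `Y`
  set W : Matrix A ((B × D) × C) ℂ := of fun a u => ψ a u.1.1 u.2 u.1.2 with hW
  set W' : Matrix A ((B × C) × D) ℂ := of fun a u => ψ a u.1.1 u.1.2 u.2 with hW'
  have hWW : W * Wᴴ = α • P := by
    ext a a'
    rw [mul_apply, Matrix.smul_apply, smul_eq_mul, ← hρ, Fintype.sum_prod_type, Fintype.sum_prod_type]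
    refine Finset.sum_congr rfl fun b _ => ?_
    rw [Finset.sum_comm]
    rfl
  have hWW' : W' * W'ᴴ = α • P := by
    ext a a'
    rw [mul_apply, Matrix.smul_apply, smul_eq_mul, ← hρ, Fintype.sum_prod_type, Fintype.sum_prod_type]
    rfl
  set Y := Wᴴ * W' with hY
  have hYn : (p : ℂ) * ((∑ u, ∑ w, ‖Y u w‖ ^ 2 : ℝ) : ℂ) = n ^ 2 := by
    rw [sum_normSq_mat, hY, conjTranspose_mul, conjTranspose_conjTranspose, Matrix.mul_assoc,
      ← Matrix.mul_assoc W', hWW', trace_mul_comm, Matrix.mul_assoc, hWW, Matrix.smul_mul,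
      Matrix.mul_smul, hP, trace_smul, trace_smul, hp, ← hαp, smul_eq_mul, smul_eq_mul]
    ring
  have hZr : (q : ℝ) * (∑ u, ∑ w, ‖Z u w‖ ^ 2) = x * y := by exact_mod_cast hZn
  have hYr : (p : ℝ) * (∑ u, ∑ w, ‖Y u w‖ ^ 2) = n ^ 2 := by exact_mod_cast hYn
  -- n is the pairing of `Z` and `Y`
  have hpair : (n : ℂ) = ∑ k : ((B × D) × D) × ((B × C) × C),
      Z k.1 k.2 * Y (k.1.1, k.2.2) (k.2.1, k.1.2) := by
    have h1 : (n : ℂ) = ∑ a, ∑ b, ∑ c, ∑ d, ∑ u : B × D, ∑ w : B × C,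
        (star (R (b, d) u) * R' (b, c) w) * (star (ψ a u.1 c u.2) * ψ a w.1 w.2 d) := by
      rw [hnc]
      refine Finset.sum_congr rfl fun a _ => Finset.sum_congr rfl fun b _ =>
        Finset.sum_congr rfl fun c _ => Finset.sum_congr rfl fun d _ => ?_
      have e : ψ a b c d * star (ψ a b c d) = (∑ w : B × C, R' (b, c) w * ψ a w.1 w.2 d) *
          star (∑ u : B × D, R (b, d) u * ψ a u.1 c u.2) := by rw [hR3', hR3]
      rw [e, mul_comm, star_sum, Finset.sum_mul_sum]
      refine Finset.sum_congr rfl fun u _ => Finset.sum_congr rfl fun w _ => ?_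
      rw [star_mul']
      ring
    have h2 : ∑ k : ((B × D) × D) × ((B × C) × C),
      Z k.1 k.2 * Y (k.1.1, k.2.2) (k.2.1, k.1.2) =
      ∑ u : B × D, ∑ d, ∑ w : B × C, ∑ c, ∑ b, ∑ a,
        (star (R (b, d) u) * R' (b, c) w) * (star (ψ a u.1 c u.2) * ψ a w.1 w.2 d) := by
      rw [Fintype.sum_prod_type, Fintype.sum_prod_type]
      refine Finset.sum_congr rfl fun u _ => Finset.sum_congr rfl fun d _ => ?_
      rw [Fintype.sum_prod_type]
      refine Finset.sum_congr rfl fun w _ => Finset.sum_congr rfl fun c _ => ?_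
      rw [hZ, hY, mul_apply, mul_apply, Finset.sum_mul_sum]
      rfl
    rw [h1, h2]
    simp only [← Fintype.sum_prod_type']
    refine Fintype.sum_equiv
      (⟨fun k => (k.2.2.2.2.1, k.2.2.2.1, k.2.2.2.2.2, k.2.2.1, k.2.1, k.1),
        fun k => (k.2.2.2.2.2, k.2.2.2.2.1, k.2.2.2.1, k.2.1, k.1, k.2.2.1), ?_, ?_⟩ :
        (A × B × C × D × (B × D) × (B × C)) ≃ ((B × D) × D × (B × C) × C × B × A)) _ _ ?_
    · intro k; rfl
    · intro k; rfl
    · intro k; rfl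
  have hcs : n ^ 2 ≤ (∑ u, ∑ w, ‖Z u w‖ ^ 2) * (∑ u, ∑ w, ‖Y u w‖ ^ 2) := by
    have h1 : n ≤ ∑ k : ((B × D) × D) × ((B × C) × C),
        ‖Z k.1 k.2‖ * ‖Y (k.1.1, k.2.2) (k.2.1, k.1.2)‖ := by
      have : ‖(n : ℂ)‖ = n := by
        rw [Complex.norm_real, Real.norm_of_nonneg hnpos.le]
      rw [← this, hpair]
      refine (norm_sum_le _ _).trans (le_of_eq ?_)
      exact Finset.sum_congr rfl fun k _ => norm_mul _ _
    have h2 := Finset.sum_mul_sq_le_sq_mul_sq Finset.univ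
      (fun k : ((B × D) × D) × ((B × C) × C) => ‖Z k.1 k.2‖)
      (fun k => ‖Y (k.1.1, k.2.2) (k.2.1, k.1.2)‖)
    have h3 : ∑ k : ((B × D) × D) × ((B × C) × C), ‖Z k.1 k.2‖ ^ 2
        = ∑ u, ∑ w, ‖Z u w‖ ^ 2 := by rw [Fintype.sum_prod_type]
    have h4 : ∑ k : ((B × D) × D) × ((B × C) × C), ‖Y (k.1.1, k.2.2) (k.2.1, k.1.2)‖ ^ 2
        = ∑ u, ∑ w, ‖Y u w‖ ^ 2 := by
      rw [← Fintype.sum_prod_type']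
      exact Fintype.sum_equiv
        (⟨fun k => ((k.1.1, k.2.2), (k.2.1, k.1.2)),
          fun k => ((k.1.1, k.2.2), (k.2.1, k.1.2)), fun _ => rfl, fun _ => rfl⟩ :
          (((B × D) × D) × ((B × C) × C)) ≃ (((B × D) × C) × ((B × C) × D))) _ _ (fun _ => rfl)
    rw [h3, h4] at h2
    exact (pow_le_pow_left₀ hnpos.le h1 2).trans h2
  have : n ^ 2 * ((p : ℝ) * q) ≤ n ^ 2 * (x * y) := by
    calc n ^ 2 * ((p : ℝ) * q) ≤
        ((∑ u, ∑ w, ‖Z u w‖ ^ 2) * (∑ u, ∑ w, ‖Y u w‖ ^ 2)) * ((p : ℝ) * q) := by gcongr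
      _ = ((q : ℝ) * (∑ u, ∑ w, ‖Z u w‖ ^ 2)) * ((p : ℝ) * (∑ u, ∑ w, ‖Y u w‖ ^ 2)) := by ring
      _ = n ^ 2 * (x * y) := by rw [hZr, hYr]; ring
  have h := le_of_mul_le_mul_left this (by positivity)
  exact_mod_cast h

/-- The flattening `BD | AC`. -/
def flatBD {A B C D : Type} (ψ : A → B → C → D → ℂ) : Matrix (B × D) (A × C) ℂ :=
  of fun p q => ψ q.1 p.1 q.2 p.2

/-- The flattening `BC | AD`. -/
def flatBC {A B C D : Type} (ψ : A → B → C → D → ℂ) : Matrix (B × C) (A × D) ℂ :=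
  of fun p q => ψ q.1 p.1 p.2 q.2

/-- Partial trace of the range projection is scalar. -/
lemma partialTrace_scalar {G B D Y : Type} [Fintype B] [Fintype D] [Fintype Y]
    [DecidableEq B] (eB : G → Equiv.Perm B) (eD : G → Equiv.Perm D) (eY : G → Equiv.Perm Y)
    (F : Matrix (B × D) Y ℂ)
    (hF : ∀ g, F.submatrix (fun p => (eB g p.1, eD g p.2)) (eY g) = F)
    (Q : Matrix B B ℂ) (hQ : SMin eB Q)
    (hQF : ∀ b d u, ∑ b', Q b b' * F (b', d) u = F (b, d) u)
    (R : Matrix (B × D) (B × D) ℂ) (S : Matrix Y (B × D) ℂ)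
    (h1 : Rᴴ = R) (h2 : R * F = F) (h3 : R = F * S) :
    ∃ t : ℂ, ∀ b b', ∑ d, R (b, d) (b', d) = t * Q b b' := by
  have hinv : SInv (fun g => Equiv.prodCongr (eB g) (eD g)) R :=
    rangeProj_inv _ eY F hF R S h1 h2 h3
  have hQR : ∀ b d u, ∑ b', Q b b' * R (b', d) u = R (b, d) u := by
    intro b d u
    rw [h3]
    simp only [mul_apply, Finset.mul_sum]
    rw [Finset.sum_comm]
    refine Finset.sum_congr rfl fun w _ => ?_
    rw [← hQF b d w, Finset.sum_mul]
    exact Finset.sum_congr rfl fun _ _ => by ring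
  have c1 : (of fun b b' => ∑ d, R (b, d) (b', d) : Matrix B B ℂ)ᴴ =
      of fun b b' => ∑ d, R (b, d) (b', d) := by
    ext b b'
    simp only [conjTranspose_apply, of_apply, star_sum]
    refine Finset.sum_congr rfl fun d _ => ?_
    rw [← conjTranspose_apply R, h1]
  have c2 : SInv eB (of fun b b' => ∑ d, R (b, d) (b', d)) := by
    intro g
    ext b b'
    simp only [submatrix_apply, of_apply]
    rw [← Equiv.sum_comp (eD g)]
    refine Finset.sum_congr rfl fun d _ => ?_
    exact congrFun (congrFun (hinv g) (b, d)) (b', d)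
  have c3 : Q * (of fun b b' => ∑ d, R (b, d) (b', d)) =
      of fun b b' => ∑ d, R (b, d) (b', d) := by
    ext b b'
    simp only [mul_apply, of_apply, Finset.mul_sum]
    rw [Finset.sum_comm]
    exact Finset.sum_congr rfl fun d _ => hQR b d (b', d)
  obtain ⟨t, ht⟩ := hQ.scalar _ c1 c2 c3
  refine ⟨t, fun b b' => ?_⟩
  have := congrFun (congrFun ht b) b'
  simpa using this

lemma core_min {G A B C D : Type} [Fintype A] [Fintype B] [Fintype C] [Fintype D]
    [DecidableEq A] [DecidableEq B] [DecidableEq C] [DecidableEq D]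
    (eA : G → Equiv.Perm A) (eB : G → Equiv.Perm B) (eC : G → Equiv.Perm C)
    (eD : G → Equiv.Perm D) (ψ : A → B → C → D → ℂ)
    (hψ : ∀ g a b c d, ψ (eA g a) (eB g b) (eC g c) (eD g d) = ψ a b c d)
    (P : Matrix A A ℂ) (Q : Matrix B B ℂ) (hP : SMin eA P) (hQ : SMin eB Q)
    (hPψ : ∀ a b c d, ∑ a', P a a' * ψ a' b c d = ψ a b c d)
    (hQψ : ∀ a b c d, ∑ b', Q b b' * ψ a b' c d = ψ a b c d)
    (hne : ∃ a b c d, ψ a b c d ≠ 0) :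
    P.rank * Q.rank ≤ (flatBD ψ).rank * (flatBC ψ).rank := by
  obtain ⟨R, hR1, hR2, hR3, ⟨S, hS⟩, hR5⟩ := exists_rangeProj (flatBD ψ)
  obtain ⟨R', hR1', hR2', hR3', ⟨S', hS'⟩, hR5'⟩ := exists_rangeProj (flatBC ψ)
  obtain ⟨t, ht⟩ := partialTrace_scalar eB eD (fun g => Equiv.prodCongr (eA g) (eC g)) (flatBD ψ)
    (by intro g; ext p q; exact hψ g _ _ _ _) Q hQ (fun b d u => hQψ _ _ _ _) R S hR1 hR3 hS
  obtain ⟨t', ht'⟩ := partialTrace_scalar eB eC (fun g => Equiv.prodCongr (eA g) (eD g)) (flatBC ψ)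
    (by intro g; ext p q; exact hψ g _ _ _ _) Q hQ (fun b d u => hQψ _ _ _ _) R' S' hR1' hR3' hS'
  set W : Matrix A (B × C × D) ℂ := of fun a u => ψ a u.1 u.2.1 u.2.2 with hW
  have hWi : ∀ g, W.submatrix (eA g)
      (Equiv.prodCongr (eB g) (Equiv.prodCongr (eC g) (eD g))) = W := by
    intro g
    ext a u
    exact hψ g _ _ _ _
  have hPW : P * W = W := by
    ext a u
    exact hPψ _ _ _ _
  obtain ⟨α, hα⟩ := hP.scalar (W * Wᴴ) (by simp) (by
    intro g
    conv_rhs => rw [← hWi g]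
    rw [conjTranspose_submatrix, submatrix_mul_equiv]) (by rw [← Matrix.mul_assoc, hPW])
  refine core_cs ψ R R' P Q α t t' P.rank Q.rank _ _ hR1 hR2 ?_ hR1' hR2' ?_ hR5 hR5' hP.idem
    hQ.idem (trace_proj P hP.herm hP.idem) (trace_proj Q hQ.herm hQ.idem) ht ht' ?_ hne
  · intro a b c d
    exact congrFun (congrFun hR3 (b, d)) (a, c)
  · intro a b c d
    exact congrFun (congrFun hR3' (b, c)) (a, d)
  · intro a a'
    have := congrFun (congrFun hα a) a'
    rw [mul_apply, Fintype.sum_prod_type] at this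
    simp only [Fintype.sum_prod_type] at this
    exact this


lemma exists_rank_factor {X Y : Type*} [Fintype X] [Fintype Y] [DecidableEq X] [DecidableEq Y]
    (M : Matrix X Y ℂ) :
    ∃ (U : Matrix X (Fin M.rank) ℂ) (V : Matrix (Fin M.rank) Y ℂ)
      (L : Matrix (Fin M.rank) X ℂ) (R : Matrix Y (Fin M.rank) ℂ),
      M = U * V ∧ L * U = 1 ∧ V * R = 1 := by
  set f := Matrix.toLin' M with hf
  have hr : Module.finrank ℂ (LinearMap.range f) = M.rank := by
    rw [hf, Matrix.toLin'_apply', Matrix.rank]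
  let e : LinearMap.range f ≃ₗ[ℂ] (Fin M.rank → ℂ) :=
    LinearEquiv.ofFinrankEq _ _ (by rw [hr]; simp)
  let v : (Y → ℂ) →ₗ[ℂ] (Fin M.rank → ℂ) := e.toLinearMap ∘ₗ f.rangeRestrict
  let u : (Fin M.rank → ℂ) →ₗ[ℂ] (X → ℂ) := (LinearMap.range f).subtype ∘ₗ e.symm.toLinearMap
  have huv : u ∘ₗ v = f := by
    ext i
    simp [u, v]
  have hu : LinearMap.ker u = ⊥ := by
    rw [LinearMap.ker_eq_bot]
    exact Subtype.val_injective.comp e.symm.injective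
  have hv : LinearMap.range v = ⊤ := by
    rw [LinearMap.range_eq_top]
    exact e.surjective.comp f.surjective_rangeRestrict
  obtain ⟨l, hl⟩ := u.exists_leftInverse_of_injective hu
  obtain ⟨r, hr⟩ := v.exists_rightInverse_of_surjective hv
  refine ⟨LinearMap.toMatrix' u, LinearMap.toMatrix' v, LinearMap.toMatrix' l,
    LinearMap.toMatrix' r, ?_, ?_, ?_⟩
  · rw [← LinearMap.toMatrix'_comp, huv, hf, LinearMap.toMatrix'_toLin']
  · rw [← LinearMap.toMatrix'_comp, hl, LinearMap.toMatrix'_id]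
  · rw [← LinearMap.toMatrix'_comp, hr, LinearMap.toMatrix'_id]

lemma rank_le_of_factor {X Y Z : Type*} [Fintype Y] [Fintype Z]
    (U : Matrix X Z ℂ) (V : Matrix Z Y ℂ) : (U * V).rank ≤ Fintype.card Z :=
  (rank_mul_le_left U V).trans (rank_le_card_width U)

lemma rank_sum_le' {ι X Y : Type*} [Fintype ι] [Fintype X] [Fintype Y]
    (F : ι → Matrix X Y ℂ) : (∑ i, F i).rank ≤ ∑ i, (F i).rank := by
  classical
  choose U V L R h1 h2 h3 using fun i => exists_rank_factor (F i)
  let U' : Matrix X (Σ i, Fin (F i).rank) ℂ := of fun x k => U k.1 x k.2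
  let V' : Matrix (Σ i, Fin (F i).rank) Y ℂ := of fun k y => V k.1 k.2 y
  have : ∑ i, F i = U' * V' := by
    ext x y
    rw [mul_apply, Fintype.sum_sigma, Matrix.sum_apply]
    refine Finset.sum_congr rfl fun i _ => ?_
    conv_lhs => rw [h1 i, mul_apply]
    rfl
  rw [this]
  refine (rank_le_of_factor U' V').trans (le_of_eq ?_)
  simp

/-- Tensor power of a matrix. -/
def tpow {X Y : Type*} (n : ℕ) (M : Matrix X Y ℂ) : Matrix (Fin n → X) (Fin n → Y) ℂ :=
  of fun f g => ∏ k, M (f k) (g k)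

lemma tpow_mul {X Y Z : Type*} [Fintype Y] (n : ℕ) (M : Matrix X Y ℂ) (N : Matrix Y Z ℂ) :
    tpow n (M * N) = tpow n M * tpow n N := by
  classical
  ext f g
  simp only [tpow, of_apply, mul_apply, ← Finset.prod_mul_distrib]
  rw [Finset.prod_univ_sum, Fintype.piFinset_univ]

lemma tpow_one {X : Type*} [DecidableEq X] (n : ℕ) :
    tpow n (1 : Matrix X X ℂ) = 1 := by
  ext f g
  simp only [tpow, of_apply, one_apply]
  by_cases h : f = g
  · simp [h]
  · rw [if_neg h]
    obtain ⟨k, hk⟩ := Function.ne_iff.mp h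
    exact Finset.prod_eq_zero (Finset.mem_univ k) (if_neg hk)

lemma rank_tpow {X Y : Type*} [Fintype X] [Fintype Y] (n : ℕ)
    (M : Matrix X Y ℂ) : (tpow n M).rank = M.rank ^ n := by
  classical
  obtain ⟨U, V, L, R, h1, h2, h3⟩ := exists_rank_factor M
  apply le_antisymm
  · have : tpow n M = tpow n U * tpow n V := by rw [← tpow_mul, ← h1]
    rw [this]
    refine (rank_le_of_factor _ _).trans (le_of_eq ?_)
    simp
  · have : tpow n L * (tpow n M * tpow n R) = 1 := by
      rw [← tpow_mul, ← tpow_mul, ← tpow_one]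
      congr 1
      calc L * (M * R) = L * (U * V * R) := by rw [← h1]
        _ = (L * U) * (V * R) := by simp only [Matrix.mul_assoc]
        _ = 1 := by rw [h2, h3, Matrix.mul_one]
    have h4 := (rank_mul_le_right (tpow n L) (tpow n M * tpow n R)).trans
      (rank_mul_le_left (tpow n M) (tpow n R))
    rw [this, rank_one] at h4
    simpa using h4

lemma rank_kron_le {X Y : Type*} [Fintype X] [Fintype Y] (P : Matrix X X ℂ) (Q : Matrix Y Y ℂ) :
    (kroneckerMap (· * ·) P Q).rank ≤ P.rank * Q.rank := by
  classical
  obtain ⟨U, V, -, -, h1, -, -⟩ := exists_rank_factor P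
  obtain ⟨U', V', -, -, h1', -, -⟩ := exists_rank_factor Q
  have : kroneckerMap (· * ·) P Q =
      kroneckerMap (· * ·) U U' * kroneckerMap (· * ·) V V' := by
    rw [← Matrix.mul_kronecker_mul, ← h1, ← h1']
  rw [this]
  refine (rank_le_of_factor _ _).trans (le_of_eq ?_)
  simp

/-- The permutation action on words. -/
def wordAct {n : ℕ} {X : Type} (σ : Equiv.Perm (Fin n)) : Equiv.Perm (Fin n → X) :=
  ⟨fun f => f ∘ σ, fun f => f ∘ σ.symm, fun f => by ext; simp, fun f => by ext; simp⟩

lemma exists_perm_of_count {n : ℕ} {Y : Type} [DecidableEq Y] (f g : Fin n → Y)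
    (h : ∀ y, Fintype.card {k // f k = y} = Fintype.card {k // g k = y}) :
    ∃ σ : Equiv.Perm (Fin n), g ∘ σ = f := by
  have e := fun y => Fintype.card_eq.mp (h y)
  let e' : ∀ y, {k // f k = y} ≃ {k // g k = y} := fun y => Classical.choice (e y)
  refine ⟨(Equiv.sigmaFiberEquiv f).symm.trans
    ((Equiv.sigmaCongrRight e').trans (Equiv.sigmaFiberEquiv g)), ?_⟩
  ext k
  exact (e' (f k) ⟨k, rfl⟩).2

lemma card_le_of_inv {n : ℕ} {X ι : Type} [Fintype X] [DecidableEq X] [Fintype ι]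
    (F : ι → Matrix (Fin n → X) (Fin n → X) ℂ)
    (h1 : ∀ i (σ : Equiv.Perm (Fin n)) f g, F i (f ∘ σ) (g ∘ σ) = F i f g)
    (h2 : ∀ i, F i ≠ 0) (h3 : ∀ i, F i * F i = F i) (h4 : ∀ i j, i ≠ j → F i * F j = 0) :
    Fintype.card ι ≤ (n + 1) ^ (Fintype.card X * Fintype.card X) := by
  classical
  have hli : LinearIndependent ℂ F := by
    rw [Fintype.linearIndependent_iff]
    intro c hc i
    have := congrArg (fun M => M * F i) hc
    simp only [Finset.sum_mul, Matrix.smul_mul, Matrix.zero_mul] at this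
    rw [Finset.sum_eq_single i] at this
    · rw [h3] at this
      exact (smul_eq_zero.mp this).resolve_right (h2 i)
    · intro j _ hj
      rw [h4 j i hj, smul_zero]
    · simp
  let pr : (Fin n → X) → (Fin n → X) → (Fin n → X × X) := fun f g k => (f k, g k)
  let τ : (Fin n → X) → (Fin n → X) → (X × X → Fin (n + 1)) := fun f g y =>
    ⟨Fintype.card {k // pr f g k = y}, by
      have := Fintype.card_subtype_le (fun k => pr f g k = y)
      simp only [Fintype.card_fin] at this
      omega⟩
  have hτ : ∀ f g f' g', τ f g = τ f' g' → ∀ i, F i f g = F i f' g' := by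
    intro f g f' g' h i
    obtain ⟨σ, hσ⟩ := exists_perm_of_count (pr f g) (pr f' g') (fun y => by
      have := congrArg Fin.val (congrFun h y)
      exact this)
    rw [← h1 i σ f' g']
    congr 1
    · ext k
      exact (congrArg Prod.fst (congrFun hσ k)).symm
    · ext k
      exact (congrArg Prod.snd (congrFun hσ k)).symm
  let T : ((X × X → Fin (n + 1)) → ℂ) →ₗ[ℂ] Matrix (Fin n → X) (Fin n → X) ℂ :=
    { toFun := fun φ => of fun f g => φ (τ f g)
      map_add' := fun _ _ => rfl
      map_smul' := fun _ _ => rfl }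
  have hG : ∀ i, ∃ φ, T φ = F i := by
    intro i
    refine ⟨fun s => if h : ∃ p : (Fin n → X) × (Fin n → X), τ p.1 p.2 = s then
      F i h.choose.1 h.choose.2 else 0, ?_⟩
    ext f g
    have hex : ∃ p : (Fin n → X) × (Fin n → X), τ p.1 p.2 = τ f g := ⟨(f, g), rfl⟩
    show dite _ _ _ = _
    rw [dif_pos hex]
    exact hτ _ _ _ _ hex.choose_spec i
  choose φ hφ using hG
  have hφli : LinearIndependent ℂ φ := by
    apply LinearIndependent.of_comp T
    have : (⇑T ∘ φ) = F := funext hφ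
    rw [this]
    exact hli
  have := hφli.fintype_card_le_finrank
  simpa using this

lemma growth (r z K : ℕ) (h : ∀ n : ℕ, r ^ n ≤ (n + 1) ^ K * z ^ n) : r ≤ z := by
  by_contra hlt
  push Not at hlt
  rcases Nat.eq_zero_or_pos z with h0 | hz
  · have := h 1
    subst h0
    simp at this
    omega
  have hzr : (0 : ℝ) < z := by exact_mod_cast hz
  set ρ : ℝ := (r : ℝ) / z with hρ
  have hρ1 : 1 < ρ := by
    rw [hρ, one_lt_div hzr]
    exact_mod_cast hlt
  have hb : ∀ n : ℕ, ρ ^ n ≤ ((n : ℝ) + 1) ^ K := by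
    intro n
    rw [hρ, div_pow, div_le_iff₀ (by positivity)]
    exact_mod_cast h n
  have ht := tendsto_pow_const_div_const_pow_of_one_lt K hρ1
  have ht1 := (ht.comp (Filter.tendsto_add_atTop_nat 1)).eventually
    (gt_mem_nhds (show (0 : ℝ) < 1 / ρ by positivity))
  obtain ⟨n, hn⟩ := ht1.exists
  simp only [Function.comp_apply] at hn
  push_cast at hn
  rw [div_lt_div_iff₀ (by positivity) (by positivity), pow_succ] at hn
  have := hb n
  nlinarith

/-- The flattening `AB | CD`. -/
def flatAB {A B C D : Type} (ψ : A → B → C → D → ℂ) : Matrix (A × B) (C × D) ℂ :=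
  of fun p q => ψ p.1 p.2 q.1 q.2

/-- Tensor power of a four-party tensor. -/
def psiPow {A B C D : Type} (n : ℕ) (ψ : A → B → C → D → ℂ) :
    (Fin n → A) → (Fin n → B) → (Fin n → C) → (Fin n → D) → ℂ :=
  fun a b c d => ∏ k, ψ (a k) (b k) (c k) (d k)

/-- Apply local operators on the first two parties. -/
def locAct {A B C D : Type} [Fintype A] [Fintype B] (P : Matrix A A ℂ) (Q : Matrix B B ℂ)
    (ψ : A → B → C → D → ℂ) : A → B → C → D → ℂ :=
  fun a b c d => ∑ u : A × B, (P a u.1 * Q b u.2) * ψ u.1 u.2 c d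

lemma rank_flatBD_psiPow {A B C D : Type} [Fintype A] [Fintype B] [Fintype C] [Fintype D]
    (n : ℕ) (ψ : A → B → C → D → ℂ) :
    (flatBD (psiPow n ψ)).rank = (flatBD ψ).rank ^ n := by
  rw [← rank_tpow n (flatBD ψ)]
  exact rank_submatrix (tpow n (flatBD ψ))
    (Equiv.arrowProdEquivProdArrow (Fin n) (fun _ => B) (fun _ => D)).symm
    (Equiv.arrowProdEquivProdArrow (Fin n) (fun _ => A) (fun _ => C)).symm

lemma rank_flatBC_psiPow {A B C D : Type} [Fintype A] [Fintype B] [Fintype C] [Fintype D]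
    (n : ℕ) (ψ : A → B → C → D → ℂ) :
    (flatBC (psiPow n ψ)).rank = (flatBC ψ).rank ^ n := by
  rw [← rank_tpow n (flatBC ψ)]
  exact rank_submatrix (tpow n (flatBC ψ))
    (Equiv.arrowProdEquivProdArrow (Fin n) (fun _ => B) (fun _ => C)).symm
    (Equiv.arrowProdEquivProdArrow (Fin n) (fun _ => A) (fun _ => D)).symm

lemma rank_flatAB_psiPow {A B C D : Type} [Fintype A] [Fintype B] [Fintype C] [Fintype D]
    (n : ℕ) (ψ : A → B → C → D → ℂ) :
    (flatAB (psiPow n ψ)).rank = (flatAB ψ).rank ^ n := by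
  rw [← rank_tpow n (flatAB ψ)]
  exact rank_submatrix (tpow n (flatAB ψ))
    (Equiv.arrowProdEquivProdArrow (Fin n) (fun _ => A) (fun _ => B)).symm
    (Equiv.arrowProdEquivProdArrow (Fin n) (fun _ => C) (fun _ => D)).symm

lemma rank_loc_le {A B C D : Type} [Fintype A] [Fintype B] [Fintype C] [Fintype D]
    [DecidableEq C] [DecidableEq D]
    (F : Matrix (B × D) (A × C) ℂ) (P : Matrix A A ℂ) (Q : Matrix B B ℂ)
    (F' : Matrix (B × D) (A × C) ℂ)
    (h : ∀ b d a c, F' (b, d) (a, c) = ∑ u : A × B, (P a u.1 * Q b u.2) * F (u.2, d) (u.1, c)) :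
    F'.rank ≤ F.rank := by
  have : F' = kroneckerMap (· * ·) Q (1 : Matrix D D ℂ) * F *
      kroneckerMap (· * ·) Pᵀ (1 : Matrix C C ℂ) := by
    ext ⟨b, d⟩ ⟨a, c⟩
    rw [h, mul_apply, Fintype.sum_prod_type, Fintype.sum_prod_type]
    refine Finset.sum_congr rfl fun a' _ => ?_
    simp only [mul_apply, kroneckerMap_apply, Fintype.sum_prod_type, one_apply, transpose_apply]
    simp only [mul_ite, mul_one, mul_zero, ite_mul, zero_mul, Finset.sum_ite_eq,
      Finset.sum_ite_eq', Finset.mem_univ, if_true]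
    rw [Finset.sum_mul]
    exact Finset.sum_congr rfl fun b' _ => by ring
  rw [this]
  exact (rank_mul_le_left _ _).trans (rank_mul_le_right _ _)

lemma locAct_left {A B C D : Type} [Fintype A] [Fintype B] (P : Matrix A A ℂ) (Q : Matrix B B ℂ)
    (ψ : A → B → C → D → ℂ) (hP : P * P = P) (a : A) (b : B) (c : C) (d : D) :
    ∑ a', P a a' * locAct P Q ψ a' b c d = locAct P Q ψ a b c d := by
  simp only [locAct, Finset.mul_sum]
  rw [Finset.sum_comm]
  refine Finset.sum_congr rfl fun u _ => ?_
  conv_rhs => rw [← hP, mul_apply]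
  rw [Finset.sum_mul, Finset.sum_mul]
  exact Finset.sum_congr rfl fun _ _ => by ring

lemma locAct_right {A B C D : Type} [Fintype A] [Fintype B] (P : Matrix A A ℂ) (Q : Matrix B B ℂ)
    (ψ : A → B → C → D → ℂ) (hQ : Q * Q = Q) (a : A) (b : B) (c : C) (d : D) :
    ∑ b', Q b b' * locAct P Q ψ a b' c d = locAct P Q ψ a b c d := by
  simp only [locAct, Finset.mul_sum]
  rw [Finset.sum_comm]
  refine Finset.sum_congr rfl fun u _ => ?_
  conv_rhs => rw [← hQ, mul_apply]
  rw [Finset.mul_sum, Finset.sum_mul]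
  exact Finset.sum_congr rfl fun _ _ => by ring

lemma flatAB_locAct {A B C D : Type} [Fintype A] [Fintype B] (P : Matrix A A ℂ)
    (Q : Matrix B B ℂ) (ψ : A → B → C → D → ℂ) :
    flatAB (locAct P Q ψ) = kroneckerMap (· * ·) P Q * flatAB ψ := by
  ext p q
  rfl

lemma block_bound {A B C D : Type} [Fintype A] [Fintype B] [Fintype C] [Fintype D]
    [DecidableEq A] [DecidableEq B] [DecidableEq C] [DecidableEq D]
    (n : ℕ) (ψ : A → B → C → D → ℂ)
    (P : Matrix (Fin n → A) (Fin n → A) ℂ) (Q : Matrix (Fin n → B) (Fin n → B) ℂ)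
    (hP : SMin (fun σ : Equiv.Perm (Fin n) => wordAct σ) P)
    (hQ : SMin (fun σ : Equiv.Perm (Fin n) => wordAct σ) Q) :
    (flatAB (locAct P Q (psiPow n ψ))).rank ≤
      (flatBD ψ).rank ^ n * (flatBC ψ).rank ^ n := by
  by_cases hne : ∃ a b c d, locAct P Q (psiPow n ψ) a b c d ≠ 0
  · have h1 : (flatAB (locAct P Q (psiPow n ψ))).rank ≤ P.rank * Q.rank := by
      rw [flatAB_locAct]
      exact (rank_mul_le_left _ _).trans (rank_kron_le P Q)
    have h2 := core_min (fun σ : Equiv.Perm (Fin n) => wordAct σ)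
      (fun σ : Equiv.Perm (Fin n) => wordAct σ) (fun σ : Equiv.Perm (Fin n) => wordAct σ)
      (fun σ : Equiv.Perm (Fin n) => wordAct σ) (locAct P Q (psiPow n ψ)) ?_ P Q hP hQ
      (locAct_left P Q _ hP.idem) (locAct_right P Q _ hQ.idem) hne
    · refine h1.trans (h2.trans ?_)
      rw [← rank_flatBD_psiPow, ← rank_flatBC_psiPow]
      exact Nat.mul_le_mul (rank_loc_le _ P Q _ fun _ _ _ _ => rfl)
        (rank_loc_le _ P Q _ fun _ _ _ _ => rfl)
    · intro σ a b c d
      simp only [locAct]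
      rw [← Equiv.sum_comp (Equiv.prodCongr (wordAct σ) (wordAct σ))]
      refine Finset.sum_congr rfl fun u _ => ?_
      have e1 : P (wordAct σ a) (wordAct σ u.1) = P a u.1 :=
        congrFun (congrFun (hP.inv σ) a) u.1
      have e2 : Q (wordAct σ b) (wordAct σ u.2) = Q b u.2 :=
        congrFun (congrFun (hQ.inv σ) b) u.2
      have e3 : psiPow n ψ (wordAct σ u.1) (wordAct σ u.2) (wordAct σ c) (wordAct σ d)
          = psiPow n ψ u.1 u.2 c d :=
        Equiv.prod_comp σ (fun k => ψ (u.1 k) (u.2 k) (c k) (d k))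
      simp only [Equiv.prodCongr_apply, Prod.map_apply, Prod.map_fst, Prod.map_snd]
      rw [e1, e2, e3]
  · push Not at hne
    have : flatAB (locAct P Q (psiPow n ψ)) = 0 := by
      ext p q
      exact hne _ _ _ _
    rw [this, rank_zero]
    exact Nat.zero_le _

theorem rank_flat_le {A B C D : Type} [Fintype A] [Fintype B] [Fintype C] [Fintype D]
    [DecidableEq A] [DecidableEq B] [DecidableEq C] [DecidableEq D]
    (ψ : A → B → C → D → ℂ) :
    (flatAB ψ).rank ≤ (flatBD ψ).rank * (flatBC ψ).rank := by
  apply growth _ _ (Fintype.card A * Fintype.card A + Fintype.card B * Fintype.card B)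
  intro n
  have hone : ∀ X : Type, ∀ [Fintype X] [DecidableEq X],
      SProj (fun σ : Equiv.Perm (Fin n) => wordAct (X := X) σ) 1 := by
    intro X _ _
    refine ⟨by simp, by simp, fun σ => ?_⟩
    rw [submatrix_one_equiv]
  obtain ⟨ι, _, P, hP1, hP2, hP3⟩ := SProj.decomp _ _ (hone A) le_rfl
  obtain ⟨κ, _, Q, hQ1, hQ2, hQ3⟩ := SProj.decomp _ _ (hone B) le_rfl
  have hι : Fintype.card ι ≤ (n + 1) ^ (Fintype.card A * Fintype.card A) :=
    card_le_of_inv P (fun i σ f g => congrFun (congrFun ((hP1 i).inv σ) f) g)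
      (fun i => (hP1 i).ne) (fun i => (hP1 i).idem) hP2
  have hκ : Fintype.card κ ≤ (n + 1) ^ (Fintype.card B * Fintype.card B) :=
    card_le_of_inv Q (fun i σ f g => congrFun (congrFun ((hQ1 i).inv σ) f) g)
      (fun i => (hQ1 i).ne) (fun i => (hQ1 i).idem) hQ2
  have hsum : ∑ k : ι × κ, kroneckerMap (· * ·) (P k.1) (Q k.2) = 1 := by
    ext ⟨a, b⟩ ⟨a', b'⟩
    rw [Matrix.sum_apply, Fintype.sum_prod_type]
    simp only [kroneckerMap_apply]
    rw [← Finset.sum_mul_sum, ← Matrix.sum_apply, ← Matrix.sum_apply, hP3, hQ3]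
    simp only [one_apply, Prod.mk.injEq]
    split_ifs <;> simp_all
  have hdec : flatAB (psiPow n ψ) = ∑ k : ι × κ, flatAB (locAct (P k.1) (Q k.2) (psiPow n ψ)) := by
    simp only [flatAB_locAct]
    rw [← Matrix.sum_mul, hsum, Matrix.one_mul]
  rw [← rank_flatAB_psiPow, hdec]
  calc _ ≤ ∑ k : ι × κ, (flatAB (locAct (P k.1) (Q k.2) (psiPow n ψ))).rank := rank_sum_le' _
    _ ≤ ∑ _k : ι × κ, (flatBD ψ).rank ^ n * (flatBC ψ).rank ^ n :=
        Finset.sum_le_sum fun k _ => block_bound n ψ _ _ (hP1 k.1) (hQ1 k.2)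
    _ = (Fintype.card ι * Fintype.card κ) * ((flatBD ψ).rank * (flatBC ψ).rank) ^ n := by
        simp [mul_pow]
    _ ≤ _ := by
        rw [pow_add]
        gcongr

end StmtAux

theorem stmt7 (m₁ n₁ m₂ n₂ s : ℕ)
    (M : Fin m₁ → Fin n₁ → Matrix (Fin m₂) (Fin n₂) ℂ)
    (hspan : Module.finrank ℂ
        ↥(Submodule.span ℂ (Set.range fun p : Fin m₁ × Fin n₁ => M p.1 p.2)) = s)
    (hsn : s ≤ n₁)
    (hrow : ∃ (i₀ : Fin m₁) (j : Fin s → Fin n₁),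
      Function.Injective j ∧ LinearIndependent ℂ (fun t => M i₀ (j t))) :
    (bipMatrix M).rank ≤ s * (bipMatrixPT M).rank := by
  have key := StmtAux.rank_flat_le (fun (i : Fin m₁) (k : Fin m₂) (j : Fin n₁) (l : Fin n₂) =>
    M i j k l)
  have h1 : (StmtAux.flatBD (fun (i : Fin m₁) (k : Fin m₂) (j : Fin n₁) (l : Fin n₂) =>
      M i j k l)).rank = s := by
    rw [← hspan, ← rank_transpose, rank_eq_finrank_span_row]
    let e : Matrix (Fin m₂) (Fin n₂) ℂ ≃ₗ[ℂ] (Fin m₂ × Fin n₂ → ℂ) :=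
      (LinearEquiv.curry ℂ ℂ (Fin m₂) (Fin n₂)).symm
    rw [← LinearEquiv.finrank_map_eq e, Submodule.map_span, ← Set.range_comp]
    rfl
  have h2 : (StmtAux.flatBC (fun (i : Fin m₁) (k : Fin m₂) (j : Fin n₁) (l : Fin n₂) =>
      M i j k l)).rank = (bipMatrixPT M).rank := by
    rw [← rank_transpose]
    exact (rank_submatrix (bipMatrixPT M) (Equiv.refl _) (Equiv.prodComm _ _))
  rw [h1, h2] at key
  exact key
end

section
/- Let (M_{ij}), for i ∈ Fin m₁ and j ∈ Fin n₁, be an array of m₂×n₂ complex matrices whose linear span has dimension s (so the associated bipartite matrix M has Schmidt rank s), where s ≤ n₁. Suppose there exist a row index i₀ and distinct column indices j₁, …, j_{s−1} such that M_{i₀,j₁}, …, M_{i₀,j_{s−1}} are linearly independent and M_{i₀,j} = 0 for every column j ∉ {j₁, …, j_{s−1}}; and suppose furthermore there exist a row index i₁ ≠ i₀ and a column index j' with M_{i₀,j'} = 0 such that the s matrices M_{i₀,j₁}, …, M_{i₀,j_{s−1}}, M_{i₁,j'} are linearly independent. Then rank(M) ≤ s · rank(M^Γ). -/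
open Matrix

section helpers
open Module

theorem maxrank_aux {U K : Type} [AddCommGroup U] [Module ℂ U] [FiniteDimensional ℂ U]
    [AddCommGroup K] [Module ℂ K] [FiniteDimensional ℂ K] (Y0 Y : U →ₗ[ℂ] K)
    (h : ∀ t : ℂ, finrank ℂ (LinearMap.range (Y0 + t • Y)) ≤ finrank ℂ (LinearMap.range Y0))
    (u : U) (hu : Y0 u = 0) : Y u ∈ LinearMap.range Y0 := by
  by_contra hn
  obtain ⟨g0, hg0, hg1⟩ := Submodule.exists_dual_map_eq_bot_of_notMem hn inferInstance
  obtain ⟨g, hg, hgK⟩ : ∃ g : K →ₗ[ℂ] ℂ, g (Y u) = 1 ∧ ∀ x, g (Y0 x) = 0 := by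
    refine ⟨(g0 (Y u))⁻¹ • g0, by simp [hg0], fun x => ?_⟩
    have : g0 (Y0 x) ∈ (LinearMap.range Y0).map g0 := Submodule.mem_map_of_mem ⟨x, rfl⟩
    rw [hg1] at this
    simp [(Submodule.mem_bot ℂ).1 this]
  obtain ⟨P, hP⟩ := (LinearMap.range Y0).subtype.exists_leftInverse_of_injective
    (Submodule.ker_subtype _)
  obtain ⟨σ, hσ⟩ := Y0.rangeRestrict.exists_rightInverse_of_surjective
    (LinearMap.range_rangeRestrict _)
  have hσ' : ∀ k, Y0 (σ k) = k := fun k => by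
    have := congrArg Subtype.val (LinearMap.congr_fun hσ k); simpa using this
  have hP' : ∀ k : LinearMap.range Y0, P k = k := fun k => by
    simpa using LinearMap.congr_fun hP k
  let τ : LinearMap.range Y0 →ₗ[ℂ] U := σ - (g ∘ₗ Y ∘ₗ σ).smulRight u
  have hτ : ∀ k, Y0 (τ k) = k := fun k => by simp [τ, hσ', hu]
  have hτg : ∀ k, g (Y (τ k)) = 0 := fun k => by simp [τ, hg]
  let A : End ℂ (LinearMap.range Y0) := P ∘ₗ Y ∘ₗ τ
  obtain ⟨μ, hμ⟩ := ((Module.End.finite_hasEigenvalue A).insert 0).exists_notMem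
  simp only [Set.mem_insert_iff, not_or] at hμ
  obtain ⟨hμ0, hμ⟩ := hμ
  have hμ : ¬ A.HasEigenvalue μ := hμ
  have hA : ∀ k, A k = μ • k → k = 0 := by
    intro k hk
    by_contra hk0
    exact hμ (Module.End.hasEigenvalue_of_hasEigenvector
      ⟨Module.End.mem_eigenspace_iff.2 hk, hk0⟩)
  let Z := Y0 + (-μ⁻¹) • Y
  let φ : (LinearMap.range Y0 × ℂ) →ₗ[ℂ] U := τ.coprod (LinearMap.toSpanSingleton ℂ U u)
  have hφ : ∀ k c, φ (k, c) = τ k + c • u := fun k c => by simp [φ]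
  have hinj : Function.Injective (Z.rangeRestrict ∘ₗ φ) := by
    rw [← LinearMap.ker_eq_bot, LinearMap.ker_eq_bot']
    rintro ⟨k, c⟩ hkc
    have h0 : Z (τ k + c • u) = 0 := by
      have := congrArg Subtype.val hkc; simpa [hφ] using this
    have h1 : (k : K) - μ⁻¹ • (Y (τ k) + c • Y u) = 0 := by
      have : Z (τ k + c • u) = (k : K) - μ⁻¹ • (Y (τ k) + c • Y u) := by
        simp [Z, hτ, hu, sub_eq_add_neg]
      rw [← this, h0]
    have hgk : g k = 0 := by rw [← hτ k]; exact hgK _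
    have hc : c = 0 := by
      have := congrArg g h1
      simpa [hgk, hτg, hg, hμ0] using this
    subst hc
    have hk : k = 0 := by
      apply hA
      have := congrArg P h1
      simp only [zero_smul, add_zero, map_sub, map_smul, hP', map_zero] at this
      have h2 : A k = P (Y (τ k)) := rfl
      have h3 := sub_eq_zero.1 this
      rw [h2]
      conv_rhs => rw [h3, smul_smul, mul_inv_cancel₀ hμ0, one_smul]
    simp [hk]
  have h1 := LinearMap.finrank_le_finrank_of_injective hinj
  have h2 := h (-μ⁻¹)
  rw [Module.finrank_prod, finrank_self] at h1
  change finrank ℂ (LinearMap.range Z) ≤ _ at h2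
  omega

theorem finrank_split {V W : Type} [AddCommGroup V] [Module ℂ V] [FiniteDimensional ℂ V]
    [AddCommGroup W] [Module ℂ W] (f : V →ₗ[ℂ] W) (C : Submodule ℂ V) :
    finrank ℂ C = finrank ℂ (C.map f) + finrank ℂ (C ⊓ LinearMap.ker f : Submodule ℂ V) := by
  have := (f.domRestrict C).finrank_range_add_finrank_ker
  rw [LinearMap.range_domRestrict, LinearMap.ker_domRestrict] at this
  rw [← this, ← Submodule.map_comap_subtype, Submodule.finrank_map_subtype_eq]

section
variable {E F L U K : Type} [AddCommGroup E] [Module ℂ E] [AddCommGroup F] [Module ℂ F]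
  [AddCommGroup L] [Module ℂ L] [AddCommGroup U] [Module ℂ U] [AddCommGroup K] [Module ℂ K]

def colSp (X : E →ₗ[ℂ] L →ₗ[ℂ] U) (Y : F →ₗ[ℂ] U →ₗ[ℂ] K) : Submodule ℂ (E →ₗ[ℂ] K) :=
  Submodule.span ℂ (Set.range fun p : F × L => Y p.1 ∘ₗ X.flip p.2)

def blkSp (X : E →ₗ[ℂ] L →ₗ[ℂ] U) (Y : F →ₗ[ℂ] U →ₗ[ℂ] K) : Submodule ℂ (L →ₗ[ℂ] K) :=
  Submodule.span ℂ (Set.range fun p : F × E => Y p.1 ∘ₗ X p.2)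
end

theorem main_ineq_s9 (n : ℕ) : ∀ (E F L U K : Type) [AddCommGroup E] [Module ℂ E] [AddCommGroup F]
    [Module ℂ F] [AddCommGroup L] [Module ℂ L] [AddCommGroup U] [Module ℂ U] [AddCommGroup K]
    [Module ℂ K] [FiniteDimensional ℂ E] [FiniteDimensional ℂ L]
    [FiniteDimensional ℂ U] [FiniteDimensional ℂ K]
    (X : E →ₗ[ℂ] L →ₗ[ℂ] U) (Y : F →ₗ[ℂ] U →ₗ[ℂ] K),
    finrank ℂ (blkSp X Y) + finrank ℂ U ≤ n →
    finrank ℂ (colSp X Y) ≤ finrank ℂ (blkSp X Y) * finrank ℂ U := by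
  induction n with
  | zero =>
    intro E F L U K _ _ _ _ _ _ _ _ _ _ _ _ _ _ X Y h
    have hU : finrank ℂ U = 0 := by omega
    have : Subsingleton U := Module.finrank_zero_iff.1 hU
    have : colSp X Y = ⊥ := by
      rw [colSp, Submodule.span_eq_bot]
      rintro _ ⟨p, rfl⟩
      ext e
      simp [Subsingleton.elim (X e p.2) 0]
    rw [this]; simp
  | succ n ih =>
    intro E F L U K _ _ _ _ _ _ _ _ _ _ _ _ _ _ X Y h
    -- an element of maximal rank
    obtain ⟨f0, hmax⟩ : ∃ f0, ∀ f, finrank ℂ (LinearMap.range (Y f)) ≤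
        finrank ℂ (LinearMap.range (Y f0)) := by
      have hb : BddAbove (Set.range fun f => finrank ℂ (LinearMap.range (Y f))) :=
        ⟨finrank ℂ K, by rintro _ ⟨f, rfl⟩; exact Submodule.finrank_le _⟩
      obtain ⟨f0, hf0⟩ := Nat.sSup_mem (Set.range_nonempty _) hb
      exact ⟨f0, fun f => by
        have := le_csSup hb ⟨f, rfl⟩
        rw [← hf0] at this; exact this⟩
    set U0 := LinearMap.ker (Y f0) with hU0
    set K0 := LinearMap.range (Y f0) with hK0
    have hYU : ∀ f, ∀ u ∈ U0, Y f u ∈ K0 := by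
      intro f u hu
      refine maxrank_aux (Y f0) (Y f) (fun t => ?_) u hu
      rw [← map_smul, ← map_add]; exact hmax _
    have hrn : finrank ℂ K0 + finrank ℂ U0 = finrank ℂ U := (Y f0).finrank_range_add_finrank_ker
    have hrq : finrank ℂ (U ⧸ U0) + finrank ℂ U0 = finrank ℂ U := U0.finrank_quotient_add_finrank
    by_cases hρ : finrank ℂ K0 = 0
    · have : colSp X Y = ⊥ := by
        rw [colSp, Submodule.span_eq_bot]
        rintro _ ⟨p, rfl⟩
        have h0 := hmax p.1
        rw [hρ, Nat.le_zero, Submodule.finrank_eq_zero, LinearMap.range_eq_bot] at h0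
        simp [h0]
      rw [this]; simp
    -- the map e ↦ Y0 ∘ X e
    let G : E →ₗ[ℂ] (L →ₗ[ℂ] K) := (LinearMap.compRight ℂ (Y f0)) ∘ₗ X
    have hG : ∀ e l, G e l = Y f0 (X e l) := fun e l => rfl
    set E0 := LinearMap.ker G with hE0
    have hXE : ∀ e ∈ E0, ∀ l, X e l ∈ U0 := fun e he l => by
      rw [hU0, LinearMap.mem_ker, ← hG, LinearMap.mem_ker.1 he]; rfl
    have hEq : finrank ℂ (E ⧸ E0) = finrank ℂ (LinearMap.range G) :=
      G.quotKerEquivRange.finrank_eq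
    set p := finrank ℂ (LinearMap.range G) with hp
    let πE : (E →ₗ[ℂ] K) →ₗ[ℂ] (E →ₗ[ℂ] K ⧸ K0) := LinearMap.compRight ℂ K0.mkQ
    let πL : (L →ₗ[ℂ] K) →ₗ[ℂ] (L →ₗ[ℂ] K ⧸ K0) := LinearMap.compRight ℂ K0.mkQ
    let ρE : (E →ₗ[ℂ] K) →ₗ[ℂ] (E0 →ₗ[ℂ] K) := LinearMap.lcomp ℂ K E0.subtype
    -- first part
    let X1 : E →ₗ[ℂ] L →ₗ[ℂ] U ⧸ U0 := LinearMap.compRight ℂ U0.mkQ ∘ₗ X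
    let Y1 : F →ₗ[ℂ] U ⧸ U0 →ₗ[ℂ] K ⧸ K0 :=
      { toFun := fun f => U0.mapQ K0 (Y f) (hYU f)
        map_add' := fun f g => by ext u; simp
        map_smul' := fun c f => by ext u; simp }
    have hC1 : (colSp X Y).map πE = colSp X1 Y1 := by
      rw [colSp, colSp, Submodule.map_span, ← Set.range_comp]; rfl
    have hS1 : (blkSp X Y).map πL = blkSp X1 Y1 := by
      rw [blkSp, blkSp, Submodule.map_span, ← Set.range_comp]; rfl
    have hGS : LinearMap.range G ≤ blkSp X Y ⊓ LinearMap.ker πL := by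
      rintro _ ⟨e, rfl⟩
      refine ⟨Submodule.subset_span ⟨(f0, e), rfl⟩, ?_⟩
      refine LinearMap.mem_ker.2 ?_
      ext l
      change K0.mkQ (Y f0 (X e l)) = 0
      simp [hK0]
    have hSp : finrank ℂ (blkSp X1 Y1) + p ≤ finrank ℂ (blkSp X Y) := by
      rw [finrank_split πL (blkSp X Y), hS1]
      exact Nat.add_le_add_left (Submodule.finrank_mono hGS) _
    have b1 : finrank ℂ (colSp X1 Y1) ≤ finrank ℂ (blkSp X1 Y1) * finrank ℂ (U ⧸ U0) := by
      by_cases hp0 : p = 0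
      · have hGz : G = 0 := by
          rw [hp, Submodule.finrank_eq_zero, LinearMap.range_eq_bot] at hp0; exact hp0
        have : colSp X1 Y1 = ⊥ := by
          rw [colSp, Submodule.span_eq_bot]
          rintro _ ⟨q, rfl⟩
          ext e
          have : X1 e q.2 = 0 := by
            change U0.mkQ (X e q.2) = 0
            rw [Submodule.mkQ_apply, Submodule.Quotient.mk_eq_zero]
            exact hXE e (by rw [hE0, hGz]; simp) _
          simp [this]
        rw [this]; simp
      · exact ih E F L (U ⧸ U0) (K ⧸ K0) X1 Y1 (by omega)
    -- second part
    let X2 : E0 →ₗ[ℂ] L →ₗ[ℂ] U0 :=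
      { toFun := fun e => (X e).codRestrict U0 (hXE e e.2)
        map_add' := fun f g => by ext u; simp
        map_smul' := fun c f => by ext u; simp }
    let Y2 : F →ₗ[ℂ] U0 →ₗ[ℂ] K := LinearMap.lcomp ℂ K U0.subtype ∘ₗ Y
    have hC2 : (colSp X Y).map ρE = colSp X2 Y2 := by
      rw [colSp, colSp, Submodule.map_span, ← Set.range_comp]; rfl
    have hS2 : blkSp X2 Y2 ≤ blkSp X Y := by
      rw [blkSp, Submodule.span_le]
      rintro _ ⟨q, rfl⟩
      exact Submodule.subset_span ⟨(q.1, q.2), rfl⟩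
    have hS2' := Submodule.finrank_mono hS2
    have b2 : finrank ℂ (colSp X2 Y2) ≤ finrank ℂ (blkSp X2 Y2) * finrank ℂ U0 :=
      ih E0 F L U0 K X2 Y2 (by omega)
    -- third part
    let D := colSp X Y ⊓ LinearMap.ker πE
    have hD1 : finrank ℂ (D.map ρE) ≤ finrank ℂ (colSp X2 Y2) := by
      rw [← hC2]
      exact Submodule.finrank_mono (Submodule.map_mono inf_le_left)
    have hD2 : finrank ℂ (D ⊓ LinearMap.ker ρE : Submodule ℂ (E →ₗ[ℂ] K)) ≤ p * finrank ℂ K0 := by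
      let J : ((E ⧸ E0) →ₗ[ℂ] K0) →ₗ[ℂ] (E →ₗ[ℂ] K) :=
        LinearMap.lcomp ℂ K E0.mkQ ∘ₗ LinearMap.compRight ℂ K0.subtype
      have hle : D ⊓ LinearMap.ker ρE ≤ LinearMap.range J := by
        rintro φ ⟨⟨-, h1⟩, h2⟩
        have h1' : ∀ e, φ e ∈ K0 := fun e => by
          have := LinearMap.congr_fun (LinearMap.mem_ker.1 h1) e
          change K0.mkQ (φ e) = 0 at this
          simpa using this
        have h2' : E0 ≤ LinearMap.ker (φ.codRestrict K0 h1') := fun e he => by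
          have := LinearMap.congr_fun (LinearMap.mem_ker.1 h2) ⟨e, he⟩
          change φ e = 0 at this
          rw [LinearMap.mem_ker]; ext; simpa using this
        refine ⟨E0.liftQ _ h2', ?_⟩
        ext e
        rfl
      calc _ ≤ finrank ℂ (LinearMap.range J) := Submodule.finrank_mono hle
        _ ≤ finrank ℂ ((E ⧸ E0) →ₗ[ℂ] K0) := LinearMap.finrank_range_le J
        _ = _ := by rw [Module.finrank_linearMap, hEq]
    have e1 := finrank_split πE (colSp X Y)
    have e2 := finrank_split ρE D
    rw [hC1] at e1
    change _ = _ + finrank ℂ D at e1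
    have hq : finrank ℂ (U ⧸ U0) = finrank ℂ K0 := by omega
    rw [hq] at b1
    rw [← hrn]
    nlinarith [Nat.mul_le_mul_right (finrank ℂ K0) hSp, Nat.mul_le_mul_right (finrank ℂ U0) hS2']

theorem rank_ineq_s9 {m₁ n₁ m₂ n₂ : ℕ}
    (M : Fin m₁ → Fin n₁ → Matrix (Fin m₂) (Fin n₂) ℂ) :
    (bipMatrix M).rank ≤ finrank ℂ
        ↥(Submodule.span ℂ (Set.range fun p : Fin m₁ × Fin n₁ => M p.1 p.2)) *
      (bipMatrixPT M).rank := by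
  let N := bipMatrixPT M
  let R := LinearMap.range N.mulVecLin
  let q : Fin n₁ → Fin m₂ → R := fun j k => ⟨N.mulVecLin (Pi.single (j, k) 1), ⟨_, rfl⟩⟩
  have hq : ∀ i j k l, (q j k : Fin m₁ × Fin n₂ → ℂ) (i, l) = M i j k l := by
    intro i j k l
    simp [q, N, bipMatrixPT]
  let X : (Fin m₁ → ℂ) →ₗ[ℂ] (Fin n₂ → ℂ) →ₗ[ℂ] Dual ℂ R :=
    LinearMap.mk₂ ℂ (fun e l => ∑ i, ∑ b, (e i * l b) • (LinearMap.proj (i, b) ∘ₗ R.subtype))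
      (by intros; simp [add_mul, add_smul, Finset.sum_add_distrib])
      (by intros; simp [mul_assoc, mul_smul, Finset.smul_sum])
      (by intros; simp [mul_add, add_smul, Finset.sum_add_distrib])
      (by intros; simp [mul_left_comm, mul_smul, Finset.smul_sum])
  let Y : (Fin n₁ → ℂ) →ₗ[ℂ] Dual ℂ R →ₗ[ℂ] (Fin m₂ → ℂ) :=
    LinearMap.mk₂ ℂ (fun f φ k => ∑ j, f j * φ (q j k))
      (by intros; ext; simp [add_mul, Finset.sum_add_distrib])
      (by intros; ext; simp [mul_assoc, Finset.mul_sum])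
      (by intros; ext; simp [mul_add, Finset.sum_add_distrib])
      (by intros; ext; simp [mul_left_comm, Finset.mul_sum])
  have hYX : ∀ f e l k, Y f (X e l) k = ∑ j, ∑ i, ∑ b, f j * (e i * l b * M i j k b) := by
    intro f e l k
    have hX : ∀ j, X e l (q j k) = ∑ i, ∑ b, e i * l b * M i j k b := fun j => by
      simp [X, hq]
    change ∑ j, f j * X e l (q j k) = _
    simp only [hX, Finset.mul_sum]
  have main := main_ineq_s9 _ _ _ _ _ _ X Y le_rfl
  have hR : finrank ℂ (Dual ℂ R) = (bipMatrixPT M).rank := Subspace.dual_finrank_eq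
  rw [hR] at main
  have h1 : finrank ℂ (blkSp X Y) ≤ finrank ℂ
        ↥(Submodule.span ℂ (Set.range fun p : Fin m₁ × Fin n₁ => M p.1 p.2)) := by
    let T : Matrix (Fin m₂) (Fin n₂) ℂ →ₗ[ℂ] ((Fin n₂ → ℂ) →ₗ[ℂ] (Fin m₂ → ℂ)) :=
      (Matrix.toLin' : _ ≃ₗ[ℂ] _).toLinearMap
    refine le_trans (Submodule.finrank_mono ?_) (Submodule.finrank_map_le T _)
    rw [blkSp, Submodule.span_le]
    rintro _ ⟨⟨f, e⟩, rfl⟩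
    refine ⟨∑ j, ∑ i, (f j * e i) • M i j, ?_, ?_⟩
    · exact Submodule.sum_mem _ fun j _ => Submodule.sum_mem _ fun i _ =>
        Submodule.smul_mem _ _ (Submodule.subset_span ⟨(i, j), rfl⟩)
    · refine LinearMap.ext fun l => funext fun k => ?_
      change _ = Y f (X e l) k
      rw [hYX]
      simp only [T, map_sum, map_smul, LinearEquiv.coe_coe, LinearMap.sum_apply,
        LinearMap.smul_apply, Finset.sum_apply, Pi.smul_apply, Matrix.toLin'_apply,
        Matrix.mulVec, dotProduct, smul_eq_mul, Finset.mul_sum]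
      refine Finset.sum_congr rfl fun j _ => Finset.sum_congr rfl fun i _ =>
        Finset.sum_congr rfl fun b _ => ?_
      ring
  have h2 : (bipMatrix M).rank ≤ finrank ℂ (colSp X Y) := by
    let ev : ((Fin m₁ → ℂ) →ₗ[ℂ] (Fin m₂ → ℂ)) →ₗ[ℂ] (Fin m₁ × Fin m₂ → ℂ) :=
      { toFun := fun φ p => φ (Pi.single p.1 1) p.2
        map_add' := fun _ _ => rfl
        map_smul' := fun _ _ => rfl }
    refine le_trans ?_ (Submodule.finrank_map_le ev (colSp X Y))
    rw [Matrix.rank_eq_finrank_span_cols]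
    refine Submodule.finrank_mono ?_
    rw [Submodule.span_le]
    rintro _ ⟨⟨j, b⟩, rfl⟩
    refine ⟨_, Submodule.subset_span ⟨(Pi.single j 1, Pi.single b 1), rfl⟩, ?_⟩
    ext ⟨i, k⟩
    change Y (Pi.single j 1) (X (Pi.single i 1) (Pi.single b 1)) k = M i j k b
    rw [hYX]
    simp [Pi.single_apply]
  exact h2.trans (main.trans (Nat.mul_le_mul_right _ h1))

end helpers

theorem stmt9 (m₁ n₁ m₂ n₂ s : ℕ)
    (M : Fin m₁ → Fin n₁ → Matrix (Fin m₂) (Fin n₂) ℂ)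
    (hspan : Module.finrank ℂ
        ↥(Submodule.span ℂ (Set.range fun p : Fin m₁ × Fin n₁ => M p.1 p.2)) = s)
    (hsn : s ≤ n₁)
    (hrow : ∃ (i₀ : Fin m₁) (j : Fin (s - 1) → Fin n₁),
      Function.Injective j ∧ LinearIndependent ℂ (fun t => M i₀ (j t)) ∧
      (∀ jc : Fin n₁, jc ∉ Set.range j → M i₀ jc = 0) ∧
      ∃ (i₁ : Fin m₁) (j' : Fin n₁), i₁ ≠ i₀ ∧ M i₀ j' = 0 ∧
        LinearIndependent ℂ (Fin.snoc (fun t : Fin (s - 1) => M i₀ (j t)) (M i₁ j'))) :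
    (bipMatrix M).rank ≤ s * (bipMatrixPT M).rank := by
  rw [← hspan]
  exact rank_ineq_s9 M
end
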